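/- arXiv:2206.00503 — 3 statements merged into one kernel-verified Lean document; each statement's English description precedes it below -/
import Mathlib

section
/- Let r ≥ 1 be an integer and let 𝒜, ℬ be the corank-one canonical matrices of size 2r+1. A complex (2r+1)×(2r+1) matrix X belongs to 𝔤(𝒜,ℬ) if and only if there exist x₀, x₁, w, y, z ∈ ℂ such that X is the block-diagonal matrix diag(X₁, X₂), where X₁ is the r×r matrix with (X₁)_{i,i} = x₀(1 − i) + x₁·i for 0 ≤ i ≤ r−1, (X₁)_{i+1,i} = y(r − 1 − i) for 0 ≤ i ≤ r−2, (X₁)_{i,i+1} = z(i + 1) for 0 ≤ i ≤ r−2, and all other entries 0; and X₂ is the (r+1)×(r+1) matrix with (X₂)_{i,i} = (x₀ − x₁)·i + w for 0 ≤ i ≤ r, (X₂)_{i+1,i} = −z(i + 1) for 0 ≤ i ≤ r−1, (X₂)_{i,i+1} = −y(r − i) for 0 ≤ i ≤ r−1, and all other entries 0. -/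
open Matrix

/-- The first corank-one canonical matrix `𝒜` of size `2r + 1`:
`𝒜_{p, r+p} = 𝒜_{r+p, p} = 1` for `0 ≤ p ≤ r − 1`, all other entries `0`. -/
def corankOneA (r : ℕ) : Matrix (Fin (2 * r + 1)) (Fin (2 * r + 1)) ℂ :=
  Matrix.of fun p q =>
    if ((q : ℕ) = (p : ℕ) + r ∧ (p : ℕ) < r) ∨ ((p : ℕ) = (q : ℕ) + r ∧ (q : ℕ) < r)
    then 1 else 0

/-- The second corank-one canonical matrix `ℬ` of size `2r + 1`:
`ℬ_{p, r+p+1} = ℬ_{r+p+1, p} = 1` for `0 ≤ p ≤ r − 1`, all other entries `0`. -/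
def corankOneB (r : ℕ) : Matrix (Fin (2 * r + 1)) (Fin (2 * r + 1)) ℂ :=
  Matrix.of fun p q =>
    if ((q : ℕ) = (p : ℕ) + r + 1 ∧ (p : ℕ) < r) ∨ ((p : ℕ) = (q : ℕ) + r + 1 ∧ (q : ℕ) < r)
    then 1 else 0


/-- The ℂ-linear map `X ↦ XᵀM + MX`. -/
noncomputable def congrDeriv {n : Type*} [Fintype n] (M : Matrix n n ℂ) :
    Matrix n n ℂ →ₗ[ℂ] Matrix n n ℂ where
  toFun X := Xᵀ * M + M * X
  map_add' X Y := by
    simp only [Matrix.transpose_add, Matrix.add_mul, Matrix.mul_add]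
    abel
  map_smul' c X := by
    simp only [Matrix.transpose_smul, Matrix.smul_mul, Matrix.mul_smul, smul_add,
      RingHom.id_apply]

/-- The Lie algebra `𝔤(A,B)` of the stabilizer of the pencil spanned by `A` and `B`,
as a ℂ-subspace of the space of matrices: all `X` such that `XᵀA + AX` and
`XᵀB + BX` lie in the span of `{A, B}`. -/
noncomputable def stabAlg {n : Type*} [Fintype n] (A B : Matrix n n ℂ) :
    Submodule ℂ (Matrix n n ℂ) :=
  Submodule.comap (congrDeriv A) (Submodule.span ℂ {A, B}) ⊓
  Submodule.comap (congrDeriv B) (Submodule.span ℂ {A, B})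


/-- The block-diagonal matrix `diag(X₁, X₂)` of Statement 11, written in the global
coordinates `0, …, 2r` (rows/columns `0, …, r−1` form the block `X₁`, rows/columns
`r, …, 2r` form the block `X₂`). -/
def stabForm (r : ℕ) (x₀ x₁ w y z : ℂ) : Matrix (Fin (2 * r + 1)) (Fin (2 * r + 1)) ℂ :=
  Matrix.of fun i j =>
    if (i : ℕ) < r ∧ (j : ℕ) < r then
      -- the block X₁: (X₁)_{i,i} = x₀(1−i) + x₁ i, (X₁)_{i+1,i} = y(r−1−i),
      -- (X₁)_{i,i+1} = z(i+1)
      if (i : ℕ) = (j : ℕ) then x₀ * (1 - (i : ℂ)) + x₁ * (i : ℂ)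
      else if (i : ℕ) = (j : ℕ) + 1 then y * ((r : ℂ) - 1 - (j : ℂ))
      else if (j : ℕ) = (i : ℕ) + 1 then z * ((i : ℂ) + 1)
      else 0
    else if r ≤ (i : ℕ) ∧ r ≤ (j : ℕ) then
      -- the block X₂ (indices shifted by r): (X₂)_{i,i} = (x₀−x₁) i + w,
      -- (X₂)_{i+1,i} = −z(i+1), (X₂)_{i,i+1} = −y(r−i)
      if (i : ℕ) = (j : ℕ) then (x₀ - x₁) * ((i : ℂ) - (r : ℂ)) + w
      else if (i : ℕ) = (j : ℕ) + 1 then -z * ((i : ℂ) - (r : ℂ))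
      else if (j : ℕ) = (i : ℕ) + 1 then -y * (2 * (r : ℂ) - (i : ℂ))
      else 0
    else 0

/-!
Splitting the indices as `r + (r + 1)` gives `𝒜` and `ℬ` the form `fromBlocks 0 N Nᵀ 0`, where `N`
is one of the two projections `ℂ^{r+1} → ℂ^r` dropping the last or the first coordinate. The
five-parameter family already realises every pair of values `(XᵀA + AX, XᵀB + BX)` that some member
of the stabilizer attains, so it remains to see that a matrix with both values zero and a zero entry
at position `(r, r)` vanishes. For such a matrix the block equations decouple: the two off-diagonal
blocks satisfy skew-symmetry conditions whose combination shifts entries along antidiagonals, and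
the lower right block is constant along diagonals with vanishing boundary and determines the upper
left one.
-/

section Projections

variable (R : Type*) [NonAssocSemiring R] (r : ℕ)

/-- The matrix of the projection `(v₀, …, v_r) ↦ (v₀, …, v_{r-1})`, which is the off-diagonal
block of `𝒜`. -/
def initProj : Matrix (Fin r) (Fin (r + 1)) R :=
  (1 : Matrix (Fin (r + 1)) (Fin (r + 1)) R).submatrix Fin.castSucc id

/-- The matrix of the projection `(v₀, …, v_r) ↦ (v₁, …, v_r)`, which is the off-diagonal
block of `ℬ`. -/
def tailProj : Matrix (Fin r) (Fin (r + 1)) R :=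
  (1 : Matrix (Fin (r + 1)) (Fin (r + 1)) R).submatrix Fin.succ id

variable {R r} {m : Type*}

theorem initProj_apply (i : Fin r) (j : Fin (r + 1)) :
    initProj R r i j = if (i : ℕ) = j then 1 else 0 := by
  simp [initProj, Matrix.one_apply, Fin.ext_iff]

theorem tailProj_apply (i : Fin r) (j : Fin (r + 1)) :
    tailProj R r i j = if (i : ℕ) + 1 = j then 1 else 0 := by
  simp [tailProj, Matrix.one_apply, Fin.ext_iff]

theorem initProj_mul_apply (S : Matrix (Fin (r + 1)) m R) (i : Fin r) (j : m) :
    (initProj R r * S) i j = S i.castSucc j := by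
  simp [initProj, Matrix.mul_apply, Matrix.one_apply]

theorem tailProj_mul_apply (S : Matrix (Fin (r + 1)) m R) (i : Fin r) (j : m) :
    (tailProj R r * S) i j = S i.succ j := by
  simp [tailProj, Matrix.mul_apply, Matrix.one_apply]

theorem mul_initProj_apply_castSucc (P : Matrix m (Fin r) R) (i : m) (j : Fin r) :
    (P * initProj R r) i j.castSucc = P i j := by
  simp [initProj, Matrix.mul_apply, Matrix.one_apply]

theorem mul_initProj_apply_last (P : Matrix m (Fin r) R) (i : m) :
    (P * initProj R r) i (Fin.last r) = 0 := by
  simp [initProj, Matrix.mul_apply]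

theorem mul_tailProj_apply_succ (P : Matrix m (Fin r) R) (i : m) (j : Fin r) :
    (P * tailProj R r) i j.succ = P i j := by
  simp [tailProj, Matrix.mul_apply, Matrix.one_apply]

theorem mul_tailProj_apply_zero (P : Matrix m (Fin r) R) (i : m) :
    (P * tailProj R r) i 0 = 0 := by
  simp [tailProj, Matrix.mul_apply]

end Projections

section SkewSystems

variable {R : Type*} [NonAssocRing R] {r : ℕ}

-- The two hypotheses give `S i j = S (i - 1) (j + 1)`, which moves an entry below the diagonal
-- two steps closer to the diagonal.
theorem eq_zero_of_proj_mul_skew [NoZeroDivisors R] [NeZero (2 : R)]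
    {S : Matrix (Fin (r + 1)) (Fin r) R}
    (h_init : (initProj R r * S)ᵀ + initProj R r * S = 0)
    (h_tail : (tailProj R r * S)ᵀ + tailProj R r * S = 0) : S = 0 := by
  have skew_init (i j : Fin r) : S j.castSucc i = -S i.castSucc j := by
    simpa [initProj_mul_apply, add_eq_zero_iff_eq_neg] using congr_fun₂ h_init i j
  have skew_tail (i j : Fin r) : S j.succ i = -S i.succ j := by
    simpa [tailProj_mul_apply, add_eq_zero_iff_eq_neg] using congr_fun₂ h_tail i j
  have eq_zero_of_eq_neg {a : R} (h : a = -a) : a = 0 := by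
    simpa [← two_mul, NeZero.ne] using eq_neg_iff_add_eq_zero.1 h
  have lower (k i j : ℕ) (hi : i < r + 1) (hj : j < r) (hij : i = j + k) :
      S ⟨i, hi⟩ ⟨j, hj⟩ = 0 := by
    induction k using Nat.twoStepInduction generalizing i j with
    | zero =>
      obtain rfl : i = j := hij
      exact eq_zero_of_eq_neg (skew_init ⟨i, hj⟩ ⟨i, hj⟩)
    | one =>
      subst hij
      exact eq_zero_of_eq_neg (skew_tail ⟨j, hj⟩ ⟨j, hj⟩)
    | more k ih _ =>
      obtain ⟨i, rfl⟩ : ∃ i', i = i' + 1 := ⟨i - 1, by omega⟩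
      calc
        S ⟨i + 1, hi⟩ ⟨j, hj⟩ = -S ⟨j + 1, by omega⟩ ⟨i, by omega⟩ :=
          skew_tail ⟨j, hj⟩ ⟨i, by omega⟩
        _ = S ⟨i, by omega⟩ ⟨j + 1, by omega⟩ :=
          neg_eq_iff_eq_neg.2 (skew_init ⟨i, by omega⟩ ⟨j + 1, by omega⟩)
        _ = 0 := ih _ _ _ _ (by omega)
  ext i j
  obtain h | h := le_or_gt (j : ℕ) i
  · exact lower (i - j) i j i.2 j.2 (by omega)
  · calc
      S i j = -S j.castSucc ⟨i, by omega⟩ := skew_init j ⟨i, by omega⟩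
      _ = 0 := neg_eq_zero.2 (lower (j - i) j i j.castSucc.2 (by omega) (by omega))

theorem eq_zero_of_mul_proj_skew {Q : Matrix (Fin r) (Fin (r + 1)) R}
    (h_init : Qᵀ * initProj R r + (Qᵀ * initProj R r)ᵀ = 0)
    (h_tail : Qᵀ * tailProj R r + (Qᵀ * tailProj R r)ᵀ = 0) : Q = 0 := by
  have skew_init (i j : Fin r) : Q j i.castSucc + Q i j.castSucc = 0 := by
    simpa [mul_initProj_apply_castSucc] using congr_fun₂ h_init i.castSucc j.castSucc
  have skew_tail (i j : Fin r) : Q j i.succ + Q i j.succ = 0 := by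
    simpa [mul_tailProj_apply_succ] using congr_fun₂ h_tail i.succ j.succ
  have last_col (i : Fin r) : Q i (Fin.last r) = 0 := by
    simpa [mul_initProj_apply_castSucc, mul_initProj_apply_last] using
      congr_fun₂ h_init i.castSucc (Fin.last r)
  have first_col (i : Fin r) : Q i 0 = 0 := by
    simpa [mul_tailProj_apply_succ, mul_tailProj_apply_zero] using congr_fun₂ h_tail i.succ 0
  ext i j
  induction j using Fin.induction generalizing i with
  | zero => exact first_col i
  | succ j ih =>
    suffices Q j i.succ = 0 by simpa [this] using skew_tail i j
    obtain ⟨k, hk⟩ | h_last := i.succ.eq_castSucc_or_eq_last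
    · simpa [hk, ih] using skew_init k j
    · rw [h_last, last_col]

theorem eq_zero_of_toeplitz {α : Type*} [Zero α] {T : Matrix (Fin (r + 1)) (Fin (r + 1)) α}
    (toeplitz : ∀ i j : Fin r, T i.succ j.succ = T i.castSucc j.castSucc)
    (first_col : ∀ i, T i 0 = 0) (last_col : ∀ i : Fin r, T i.castSucc (Fin.last r) = 0) :
    T = 0 := by
  have lower (i j : Fin (r + 1)) (hij : j ≤ i) : T i j = 0 := by
    induction j using Fin.induction generalizing i with
    | zero => exact first_col i
    | succ j ih =>
      obtain ⟨i, rfl⟩ := Fin.exists_succ_eq_of_ne_zero (Fin.ne_zero_of_lt (j.succ_pos.trans_le hij))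
      rw [toeplitz, ih _ (by simpa using hij)]
  have upper (i j : Fin (r + 1)) (hij : i < j) : T i j = 0 := by
    induction j using Fin.reverseInduction generalizing i with
    | last =>
      obtain ⟨i, rfl⟩ := Fin.exists_castSucc_eq.2 hij.ne
      exact last_col i
    | cast j ih =>
      obtain ⟨i, rfl⟩ := Fin.exists_castSucc_eq.2 (Fin.ne_last_of_lt hij)
      rw [← toeplitz, ih _ (by simpa using hij)]
  ext i j
  exact (le_or_gt j i).elim (lower i j) (upper i j)

theorem eq_zero_of_transpose_mul_proj_add_proj_mul
    {P : Matrix (Fin r) (Fin r) R} {T : Matrix (Fin (r + 1)) (Fin (r + 1)) R}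
    (h_init : Pᵀ * initProj R r + initProj R r * T = 0)
    (h_tail : Pᵀ * tailProj R r + tailProj R r * T = 0) (h_zero : T 0 0 = 0) :
    P = 0 ∧ T = 0 := by
  have entry_init (i j : Fin r) : P j i + T i.castSucc j.castSucc = 0 := by
    simpa [mul_initProj_apply_castSucc, initProj_mul_apply] using congr_fun₂ h_init i j.castSucc
  have entry_tail (i j : Fin r) : P j i + T i.succ j.succ = 0 := by
    simpa [mul_tailProj_apply_succ, tailProj_mul_apply] using congr_fun₂ h_tail i j.succ
  have T_eq_zero : T = 0 := by
    refine eq_zero_of_toeplitz (fun i j => ?_) (Fin.cases h_zero fun i => ?_) fun i => ?_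
    · exact add_left_cancel ((entry_tail i j).trans (entry_init i j).symm)
    · simpa [mul_initProj_apply_last, initProj_mul_apply] using congr_fun₂ h_init i (Fin.last r)
    · simpa [mul_tailProj_apply_zero, tailProj_mul_apply] using congr_fun₂ h_tail i 0
  refine ⟨?_, T_eq_zero⟩
  ext i j
  simpa [T_eq_zero] using entry_init j i

end SkewSystems

section Blocks

variable {m n : Type*}

theorem submatrix_equiv_injective {α : Type*} (e : m ≃ n) :
    Function.Injective fun X : Matrix n n α => X.submatrix e e :=
  (Matrix.reindex e.symm e.symm).injective

variable [Fintype m] [Fintype n]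

theorem congrDeriv_submatrix_equiv (e : m ≃ n) (M X : Matrix n n ℂ) :
    congrDeriv (M.submatrix e e) (X.submatrix e e) = (congrDeriv M X).submatrix e e := by
  simp [congrDeriv, Matrix.transpose_submatrix, Matrix.submatrix_mul_equiv, Matrix.submatrix_add]

theorem congrDeriv_fromBlocks (N : Matrix m n ℂ) (P : Matrix m m ℂ) (Q : Matrix m n ℂ)
    (S : Matrix n m ℂ) (T : Matrix n n ℂ) :
    congrDeriv (fromBlocks 0 N Nᵀ 0) (fromBlocks P Q S T) =
      fromBlocks ((N * S)ᵀ + N * S) (Pᵀ * N + N * T) (Pᵀ * N + N * T)ᵀ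
        (Qᵀ * N + (Qᵀ * N)ᵀ) := by
  simp [congrDeriv, fromBlocks_transpose, fromBlocks_multiply, fromBlocks_add, add_comm]

end Blocks

section CorankOne

variable (r : ℕ)

/-- The splitting of the indices `0, …, 2r` into `0, …, r - 1` and `r, …, 2r`. -/
def corankOneIndex : Fin r ⊕ Fin (r + 1) ≃ Fin (2 * r + 1) :=
  finSumFinEquiv.trans (finCongr (by omega))

theorem corankOneIndex_inl_val (i : Fin r) : (corankOneIndex r (Sum.inl i) : ℕ) = i := by
  simp [corankOneIndex]

theorem corankOneIndex_inr_val (i : Fin (r + 1)) :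
    (corankOneIndex r (Sum.inr i) : ℕ) = r + i := by
  simp [corankOneIndex]

theorem corankOneA_submatrix :
    (corankOneA r).submatrix (corankOneIndex r) (corankOneIndex r) =
      fromBlocks 0 (initProj ℂ r) (initProj ℂ r)ᵀ 0 := by
  ext (i | i) (j | j) <;>
    simp only [submatrix_apply, fromBlocks_apply₁₁, fromBlocks_apply₁₂, fromBlocks_apply₂₁,
      fromBlocks_apply₂₂, transpose_apply, Matrix.zero_apply, corankOneA, of_apply, initProj_apply,
      corankOneIndex_inl_val, corankOneIndex_inr_val] <;>
    grind

theorem corankOneB_submatrix :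
    (corankOneB r).submatrix (corankOneIndex r) (corankOneIndex r) =
      fromBlocks 0 (tailProj ℂ r) (tailProj ℂ r)ᵀ 0 := by
  ext (i | i) (j | j) <;>
    simp only [submatrix_apply, fromBlocks_apply₁₁, fromBlocks_apply₁₂, fromBlocks_apply₂₁,
      fromBlocks_apply₂₂, transpose_apply, Matrix.zero_apply, corankOneB, of_apply, tailProj_apply,
      corankOneIndex_inl_val, corankOneIndex_inr_val] <;>
    grind

/-- The upper left block `X₁` of `stabForm`. -/
def stabFormHead (x₀ x₁ y z : ℂ) : Matrix (Fin r) (Fin r) ℂ :=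
  Matrix.of fun i j =>
    if (i : ℕ) = j then x₀ * (1 - i) + x₁ * i
    else if (i : ℕ) = j + 1 then y * (r - 1 - j)
    else if (j : ℕ) = i + 1 then z * (i + 1)
    else 0

/-- The lower right block `X₂` of `stabForm`. -/
def stabFormTail (x₀ x₁ w y z : ℂ) : Matrix (Fin (r + 1)) (Fin (r + 1)) ℂ :=
  Matrix.of fun i j =>
    if (i : ℕ) = j then (x₀ - x₁) * i + w
    else if (i : ℕ) = j + 1 then -z * i
    else if (j : ℕ) = i + 1 then -y * (r - i)
    else 0

variable (x₀ x₁ w y z : ℂ)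

theorem stabForm_submatrix :
    (stabForm r x₀ x₁ w y z).submatrix (corankOneIndex r) (corankOneIndex r) =
      fromBlocks (stabFormHead r x₀ x₁ y z) 0 0 (stabFormTail r x₀ x₁ w y z) := by
  ext (i | i) (j | j) <;>
    simp only [submatrix_apply, fromBlocks_apply₁₁, fromBlocks_apply₁₂, fromBlocks_apply₂₁,
      fromBlocks_apply₂₂, Matrix.zero_apply, stabForm, stabFormHead, stabFormTail, of_apply,
      corankOneIndex_inl_val, corankOneIndex_inr_val] <;>
    grind

theorem stabFormHead_transpose_mul_initProj_add :
    (stabFormHead r x₀ x₁ y z)ᵀ * initProj ℂ r + initProj ℂ r * stabFormTail r x₀ x₁ w y z =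
      (x₀ + w) • initProj ℂ r + (-y) • tailProj ℂ r := by
  ext i j
  obtain ⟨j, rfl⟩ | rfl := j.eq_castSucc_or_eq_last
  · have cast_eq : (i : ℕ) = j + 1 → (i : ℂ) = j + 1 := mod_cast id
    simp only [Matrix.add_apply, Matrix.smul_apply, smul_eq_mul, transpose_apply, of_apply,
      mul_initProj_apply_castSucc, initProj_mul_apply, stabFormHead, stabFormTail, initProj_apply,
      tailProj_apply, Fin.val_castSucc]
    grind
  · have cast_eq : r = (i : ℕ) + 1 → (r : ℂ) = i + 1 := mod_cast id
    simp only [Matrix.add_apply, Matrix.smul_apply, smul_eq_mul, mul_initProj_apply_last, of_apply,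
      initProj_mul_apply, stabFormTail, initProj_apply, tailProj_apply, Fin.val_castSucc,
      Fin.val_last]
    grind

theorem stabFormHead_transpose_mul_tailProj_add :
    (stabFormHead r x₀ x₁ y z)ᵀ * tailProj ℂ r + tailProj ℂ r * stabFormTail r x₀ x₁ w y z =
      (-z) • initProj ℂ r + (2 * x₀ - x₁ + w) • tailProj ℂ r := by
  ext i j
  obtain rfl | ⟨j, rfl⟩ := j.eq_zero_or_eq_succ
  · have cast_eq : (i : ℕ) = 0 → (i : ℂ) = 0 := mod_cast id
    simp only [Matrix.add_apply, Matrix.smul_apply, smul_eq_mul, mul_tailProj_apply_zero, of_apply,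
      tailProj_mul_apply, stabFormTail, initProj_apply, tailProj_apply, Fin.val_succ, Fin.val_zero]
    grind
  · have cast_eq : (i : ℕ) = j + 1 → (i : ℂ) = j + 1 := mod_cast id
    simp only [Matrix.add_apply, Matrix.smul_apply, smul_eq_mul, transpose_apply, of_apply,
      mul_tailProj_apply_succ, tailProj_mul_apply, stabFormHead, stabFormTail, initProj_apply,
      tailProj_apply, Fin.val_succ]
    grind

theorem congrDeriv_corankOneA_stabForm :
    congrDeriv (corankOneA r) (stabForm r x₀ x₁ w y z) =
      (x₀ + w) • corankOneA r + (-y) • corankOneB r := by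
  apply submatrix_equiv_injective (corankOneIndex r)
  simp only [← congrDeriv_submatrix_equiv, corankOneA_submatrix, corankOneB_submatrix,
    stabForm_submatrix, congrDeriv_fromBlocks, stabFormHead_transpose_mul_initProj_add,
    submatrix_add, submatrix_smul, Pi.add_apply, Pi.smul_apply, transpose_add,
    transpose_smul, fromBlocks_smul, fromBlocks_add, smul_zero, add_zero, Matrix.mul_zero,
    Matrix.zero_mul, transpose_zero]

theorem congrDeriv_corankOneB_stabForm :
    congrDeriv (corankOneB r) (stabForm r x₀ x₁ w y z) =
      (-z) • corankOneA r + (2 * x₀ - x₁ + w) • corankOneB r := by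
  apply submatrix_equiv_injective (corankOneIndex r)
  simp only [← congrDeriv_submatrix_equiv, corankOneA_submatrix, corankOneB_submatrix,
    stabForm_submatrix, congrDeriv_fromBlocks, stabFormHead_transpose_mul_tailProj_add,
    submatrix_add, submatrix_smul, Pi.add_apply, Pi.smul_apply, transpose_add,
    transpose_smul, fromBlocks_smul, fromBlocks_add, smul_zero, add_zero, Matrix.mul_zero,
    Matrix.zero_mul, transpose_zero]

variable {r x₀ x₁ w y z}

theorem eq_zero_of_congrDeriv_corankOne_eq_zero {Y : Matrix (Fin (2 * r + 1)) (Fin (2 * r + 1)) ℂ}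
    (hA : congrDeriv (corankOneA r) Y = 0) (hB : congrDeriv (corankOneB r) Y = 0)
    (h_entry : Y (corankOneIndex r (Sum.inr 0)) (corankOneIndex r (Sum.inr 0)) = 0) : Y = 0 := by
  obtain ⟨P, Q, S, T, hY⟩ : ∃ P Q S T,
      Y.submatrix (corankOneIndex r) (corankOneIndex r) = fromBlocks P Q S T :=
    ⟨_, _, _, _, (fromBlocks_toBlocks _).symm⟩
  have blocks_eq_zero {M : Matrix (Fin (2 * r + 1)) (Fin (2 * r + 1)) ℂ}
      {N : Matrix (Fin r) (Fin (r + 1)) ℂ}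
      (hM : M.submatrix (corankOneIndex r) (corankOneIndex r) = fromBlocks 0 N Nᵀ 0)
      (h : congrDeriv M Y = 0) :
      (N * S)ᵀ + N * S = 0 ∧ Pᵀ * N + N * T = 0 ∧ Qᵀ * N + (Qᵀ * N)ᵀ = 0 := by
    have h_blocks := congrDeriv_submatrix_equiv (corankOneIndex r) M Y
    rw [h, hM, hY, congrDeriv_fromBlocks, submatrix_zero, Pi.zero_apply, Pi.zero_apply,
      ← fromBlocks_zero, fromBlocks_inj] at h_blocks
    exact ⟨h_blocks.1, h_blocks.2.1, h_blocks.2.2.2⟩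
  obtain ⟨S_init, PT_init, Q_init⟩ := blocks_eq_zero (corankOneA_submatrix r) hA
  obtain ⟨S_tail, PT_tail, Q_tail⟩ := blocks_eq_zero (corankOneB_submatrix r) hB
  have h_zero : T 0 0 = 0 := by
    simpa [h_entry] using (congr_fun₂ hY (Sum.inr 0) (Sum.inr 0)).symm
  obtain ⟨rfl, rfl⟩ := eq_zero_of_transpose_mul_proj_add_proj_mul PT_init PT_tail h_zero
  obtain rfl := eq_zero_of_proj_mul_skew S_init S_tail
  obtain rfl := eq_zero_of_mul_proj_skew Q_init Q_tail
  apply submatrix_equiv_injective (corankOneIndex r)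
  simpa using hY

theorem stabForm_mem_stabAlg :
    stabForm r x₀ x₁ w y z ∈ stabAlg (corankOneA r) (corankOneB r) :=
  ⟨Submodule.mem_span_pair.2 ⟨_, _, (congrDeriv_corankOneA_stabForm r x₀ x₁ w y z).symm⟩,
    Submodule.mem_span_pair.2 ⟨_, _, (congrDeriv_corankOneB_stabForm r x₀ x₁ w y z).symm⟩⟩

theorem stabForm_apply_inr_zero :
    stabForm r x₀ x₁ w y z (corankOneIndex r (Sum.inr 0)) (corankOneIndex r (Sum.inr 0)) = w := by
  simp [stabForm, corankOneIndex_inr_val]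

end CorankOne

/-- A matrix `X` lies in the Lie algebra of the stabilizer of the
corank-one canonical pencil of size `2r + 1` if and only if it is of the explicit
block-diagonal tridiagonal form `stabForm r x₀ x₁ w y z` for some parameters. -/
theorem corankOne_stabilizer_mem_iff
    (r : ℕ) (hr : 1 ≤ r) (X : Matrix (Fin (2 * r + 1)) (Fin (2 * r + 1)) ℂ) :
    X ∈ stabAlg (corankOneA r) (corankOneB r) ↔
      ∃ x₀ x₁ w y z : ℂ, X = stabForm r x₀ x₁ w y z := by
  constructor
  · intro ⟨hA, hB⟩
    obtain ⟨a, b, hA⟩ := Submodule.mem_span_pair.1 hA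
    obtain ⟨c, d, hB⟩ := Submodule.mem_span_pair.1 hB
    set w := X (corankOneIndex r (Sum.inr 0)) (corankOneIndex r (Sum.inr 0))
    refine ⟨a - w, 2 * (a - w) + w - d, w, -b, -c, sub_eq_zero.1 ?_⟩
    apply eq_zero_of_congrDeriv_corankOne_eq_zero
    · rw [map_sub, congrDeriv_corankOneA_stabForm, ← hA, sub_add_cancel, neg_neg, sub_self]
    · rw [map_sub, congrDeriv_corankOneB_stabForm, ← hB]
      module
    · rw [Matrix.sub_apply, stabForm_apply_inr_zero, sub_self]
  · rintro ⟨x₀, x₁, w, y, z, rfl⟩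
    exact stabForm_mem_stabAlg
end

section
/- Let r ≥ 1 be an integer and let 𝒜, ℬ be the corank-one canonical matrices of size 2r+1. Then the 5-dimensional complex Lie algebra 𝔤(𝒜,ℬ), with bracket the matrix commutator [X,Y] = XY − YX, is isomorphic to the semidirect product 𝔰𝔩₂ ⋉ ℂ². Concretely, there exists a ℂ-basis C₁, C₂, 𝒳, 𝒴, 𝒵 of 𝔤(𝒜,ℬ) satisfying the commutator relations: [C₁,C₂] = 0; [𝒳,𝒴] = 𝒵, [𝒵,𝒳] = 2𝒳, [𝒵,𝒴] = −2𝒴; [C₁,𝒳] = 𝒳, [C₂,𝒳] = −𝒳, [C₁,𝒴] = −𝒴, [C₂,𝒴] = 𝒴, [C₁,𝒵] = 0, [C₂,𝒵] = 0. -/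
open Matrix

/-! In blocks of sizes `r` and `r + 1`, the matrices `𝒜` and `ℬ` are off-diagonal with upper right
blocks `L = [I 0]` and `R = [0 I]`. For a stabilizing `X` the diagonal blocks of `Xᵀ𝒜 + 𝒜X` and
`Xᵀℬ + ℬX` vanish, which forces `X = diag(-Mᵀ, S)`; the remaining condition is that the map
`F ↦ F S - M F` preserves the span of `L` and `R`. The action on this span gives a map from the
stabilizer to `𝔤𝔩₂` whose kernel is the scalars `(t, t)`, because the Kronecker block has only
scalar endomorphisms. It is onto: `𝔰𝔩₂` acts through its irreducible representations of dimensions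
`r` and `r + 1`, and `(0, 1)` acts as the identity. -/

section Sl2

variable (R : Type*) [CommRing R] (n : ℕ)

/-- The raising operator `e` of the `n`-dimensional representation of `𝔰𝔩₂`, in the basis
`fʲ v / j!`, `0 ≤ j < n`, where `v` is a highest weight vector. -/
def sl2E : Matrix (Fin n) (Fin n) R :=
  of fun i j => if (i : ℕ) + 1 = j then (n : R) - (j : ℕ) else 0

/-- The lowering operator `f` of the `n`-dimensional representation of `𝔰𝔩₂`, in the basis of
`sl2E`. -/
def sl2F : Matrix (Fin n) (Fin n) R :=
  of fun i j => if (i : ℕ) = j + 1 then ((i : ℕ) : R) else 0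

/-- The weight operator `h` of the `n`-dimensional representation of `𝔰𝔩₂`, in the basis of
`sl2E`. -/
def sl2H : Matrix (Fin n) (Fin n) R :=
  diagonal fun i => (n : R) - 1 - 2 * (i : ℕ)

lemma sl2E_mul_sl2F :
    sl2E R n * sl2F R n = diagonal fun i : Fin n => ((i : ℕ) + 1 : R) * (n - 1 - (i : ℕ)) := by
  ext i k
  simp only [mul_apply, sl2E, sl2F, of_apply, ite_mul, zero_mul, diagonal_apply]
  rcases (Nat.succ_le_of_lt i.isLt).lt_or_eq with h | h
  · rw [Finset.sum_eq_single ⟨i + 1, h⟩ (by grind) (by simp)]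
    split_ifs <;> grind [Nat.cast_add_one]
  · have hn : (n : R) = (i : ℕ) + 1 := by simpa using congrArg (Nat.cast : ℕ → R) h.symm
    rw [Finset.sum_eq_zero (by grind), hn]
    simp

lemma sl2F_mul_sl2E :
    sl2F R n * sl2E R n = diagonal fun i : Fin n => ((i : ℕ) : R) * (n - (i : ℕ)) := by
  ext i k
  simp only [mul_apply, sl2E, sl2F, of_apply, ite_mul, zero_mul, diagonal_apply]
  obtain ⟨_ | i, hi⟩ := i
  · simp
  · rw [Finset.sum_eq_single ⟨i, by omega⟩ (by grind) (by simp)]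
    obtain rfl | hk := eq_or_ne k ⟨i + 1, hi⟩
    · simp
    · simp [hk.symm, Fin.val_ne_of_ne hk.symm]

lemma lie_sl2E_sl2F : ⁅sl2E R n, sl2F R n⁆ = sl2H R n := by
  rw [Ring.lie_def, sl2E_mul_sl2F, sl2F_mul_sl2E, diagonal_sub, sl2H]
  congr 1
  ext i
  ring

lemma lie_sl2H_sl2E : ⁅sl2H R n, sl2E R n⁆ = (2 : R) • sl2E R n := by
  ext i j
  simp only [Ring.lie_def, sl2H, sl2E, Matrix.sub_apply, diagonal_mul, mul_diagonal, of_apply,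
    Matrix.smul_apply, smul_eq_mul]
  split_ifs with h
  · rw [← h]
    push_cast
    ring
  · ring

lemma lie_sl2H_sl2F : ⁅sl2H R n, sl2F R n⁆ = -((2 : R) • sl2F R n) := by
  ext i j
  simp only [Ring.lie_def, sl2H, sl2F, Matrix.sub_apply, diagonal_mul, mul_diagonal, of_apply,
    Matrix.neg_apply, Matrix.smul_apply, smul_eq_mul]
  split_ifs with h
  · rw [h]
    push_cast
    ring
  · ring

end Sl2

section Kronecker

variable (R : Type*) [CommRing R] (r : ℕ)

/-- The coefficient `[I 0]` of the Kronecker block `s [I 0] + t [0 I]` of size `r × (r + 1)`. -/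
def kroneckerLeft : Matrix (Fin r) (Fin (r + 1)) R :=
  (1 : Matrix (Fin (r + 1)) (Fin (r + 1)) R).submatrix Fin.castSucc id

/-- The coefficient `[0 I]` of the Kronecker block `s [I 0] + t [0 I]` of size `r × (r + 1)`. -/
def kroneckerRight : Matrix (Fin r) (Fin (r + 1)) R :=
  (1 : Matrix (Fin (r + 1)) (Fin (r + 1)) R).submatrix Fin.succ id

variable {R r} {l : Type*}

lemma kroneckerLeft_apply (i : Fin r) (j : Fin (r + 1)) :
    kroneckerLeft R r i j = if i.castSucc = j then 1 else 0 :=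
  Matrix.one_apply

lemma kroneckerRight_apply (i : Fin r) (j : Fin (r + 1)) :
    kroneckerRight R r i j = if i.succ = j then 1 else 0 :=
  Matrix.one_apply

@[simp]
lemma kroneckerLeft_mul_apply (N : Matrix (Fin (r + 1)) l R) (i : Fin r) (j : l) :
    (kroneckerLeft R r * N) i j = N i.castSucc j := by
  simp [kroneckerLeft_apply, mul_apply]

@[simp]
lemma kroneckerRight_mul_apply (N : Matrix (Fin (r + 1)) l R) (i : Fin r) (j : l) :
    (kroneckerRight R r * N) i j = N i.succ j := by
  simp [kroneckerRight_apply, mul_apply]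

@[simp]
lemma mul_kroneckerLeft_castSucc (M : Matrix l (Fin r) R) (i : l) (j : Fin r) :
    (M * kroneckerLeft R r) i j.castSucc = M i j := by
  simp [kroneckerLeft_apply, mul_apply]

@[simp]
lemma mul_kroneckerLeft_last (M : Matrix l (Fin r) R) (i : l) :
    (M * kroneckerLeft R r) i (Fin.last r) = 0 := by
  simp [kroneckerLeft_apply, mul_apply, Fin.castSucc_ne_last]

@[simp]
lemma mul_kroneckerRight_zero (M : Matrix l (Fin r) R) (i : l) :
    (M * kroneckerRight R r) i 0 = 0 := by
  simp [kroneckerRight_apply, mul_apply, Fin.succ_ne_zero]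

@[simp]
lemma mul_kroneckerRight_succ (M : Matrix l (Fin r) R) (i : l) (j : Fin r) :
    (M * kroneckerRight R r) i j.succ = M i j := by
  simp [kroneckerRight_apply, mul_apply]

/-- The two skewness conditions read `Z i j = -Z j i` and `Z (i + 1) j = -Z (j + 1) i`; together
they give `Z (i + 1) j = Z i (j + 1)`, which moves every entry below the diagonal onto it or next
to it, where it is its own negative. -/
lemma eq_zero_of_kronecker_mul_skew [IsAddTorsionFree R] {Z : Matrix (Fin (r + 1)) (Fin r) R}
    (hL : (kroneckerLeft R r * Z)ᵀ = -(kroneckerLeft R r * Z))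
    (hR : (kroneckerRight R r * Z)ᵀ = -(kroneckerRight R r * Z)) : Z = 0 := by
  have skewL (i j : Fin r) : Z i.castSucc j = -Z j.castSucc i := by
    simpa using congr_fun₂ hL j i
  have skewR (i j : Fin r) : Z i.succ j = -Z j.succ i := by
    simpa using congr_fun₂ hR j i
  have lower (d : ℕ) : ∀ (i : Fin (r + 1)) (j : Fin r), (i : ℕ) = j + d → Z i j = 0 := by
    induction d using Nat.twoStepInduction with
    | zero =>
      intro i j h
      obtain rfl : i = j.castSucc := Fin.ext h
      exact self_eq_neg.mp (skewL j j)
    | one =>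
      intro i j h
      obtain rfl : i = j.succ := Fin.ext h
      exact self_eq_neg.mp (skewR j j)
    | more d ih _ =>
      intro i j h
      obtain ⟨i, rfl⟩ := Fin.exists_succ_eq.mpr (show i ≠ 0 by rintro rfl; simp at h)
      have hi : (i : ℕ) = j + 1 + d := by rw [Fin.val_succ] at h; omega
      let j' : Fin r := ⟨j + 1, by omega⟩
      calc Z i.succ j = -Z j'.castSucc i := skewR i j
        _ = Z i.castSucc j' := (skewL i j').symm
        _ = 0 := ih _ _ hi
  ext i j
  rcases le_or_gt (j : ℕ) i with h | h
  · exact lower (i - j) i j (by omega)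
  · let i' : Fin r := ⟨i, by omega⟩
    calc Z i j = -Z j.castSucc i' := skewL i' j
      _ = 0 := by rw [lower (j - i) _ _ (by simp only [Fin.val_castSucc, i']; omega), neg_zero]

lemma eq_smul_one_of_toeplitz_of_border_eq_zero {S : Matrix (Fin (r + 1)) (Fin (r + 1)) R}
    (toeplitz : ∀ i j : Fin r, S i.succ j.succ = S i.castSucc j.castSucc)
    (hrow : ∀ i : Fin r, S i.castSucc (Fin.last r) = 0) (hcol : ∀ i : Fin r, S i.succ 0 = 0) :
    S = S 0 0 • 1 := by
  have upper (j : Fin (r + 1)) : ∀ i < j, S i j = 0 := by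
    induction j using Fin.reverseInduction with
    | last =>
      intro i h
      obtain ⟨i, rfl⟩ := Fin.exists_castSucc_eq.mpr h.ne
      exact hrow i
    | cast j ih =>
      intro i h
      obtain ⟨i, rfl⟩ := Fin.exists_castSucc_eq.mpr (h.trans_le (Fin.le_last _)).ne
      rw [← toeplitz, ih i.succ (by simpa using h)]
  have lower (j : Fin (r + 1)) : ∀ i > j, S i j = 0 := by
    induction j using Fin.induction with
    | zero =>
      intro i h
      obtain ⟨i, rfl⟩ := Fin.exists_succ_eq.mpr h.ne'
      exact hcol i
    | succ j ih =>
      intro i h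
      obtain ⟨i, rfl⟩ := Fin.exists_succ_eq.mpr ((Fin.zero_le _).trans_lt h).ne'
      rw [toeplitz, ih i.castSucc (by simpa using h)]
  have diag (i : Fin (r + 1)) : S i i = S 0 0 := by
    induction i using Fin.induction with
    | zero => rfl
    | succ i ih => rw [toeplitz, ih]
  ext i j
  rcases lt_trichotomy i j with h | rfl | h
  · simp [upper j i h, h.ne]
  · simp [diag i]
  · simp [lower j i h, h.ne']

lemma eq_smul_one_of_kronecker_intertwine {M : Matrix (Fin r) (Fin r) R}
    {S : Matrix (Fin (r + 1)) (Fin (r + 1)) R}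
    (hL : kroneckerLeft R r * S = M * kroneckerLeft R r)
    (hR : kroneckerRight R r * S = M * kroneckerRight R r) :
    M = S 0 0 • 1 ∧ S = S 0 0 • 1 := by
  have hM (i j : Fin r) : S i.castSucc j.castSucc = M i j := by
    simpa using congr_fun₂ hL i j.castSucc
  have hS : S = S 0 0 • 1 := eq_smul_one_of_toeplitz_of_border_eq_zero
    (fun i j => by simpa [hM] using congr_fun₂ hR i j.succ)
    (fun i => by simpa using congr_fun₂ hL i (Fin.last r))
    (fun i => by simpa using congr_fun₂ hR i 0)
  refine ⟨?_, hS⟩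
  ext i j
  rw [← hM, hS]
  simp [Matrix.one_apply]

lemma kroneckerLeft_mul_transpose_self : kroneckerLeft R r * (kroneckerLeft R r)ᵀ = 1 := by
  ext i j
  rw [kroneckerLeft_mul_apply]
  simp [kroneckerLeft_apply, Matrix.one_apply, eq_comm]

lemma kroneckerRight_mul_transpose_self : kroneckerRight R r * (kroneckerRight R r)ᵀ = 1 := by
  ext i j
  rw [kroneckerRight_mul_apply]
  simp [kroneckerRight_apply, Matrix.one_apply, eq_comm]

end Kronecker

section Equivalence

variable {R m n : Type*} [CommRing R] [Fintype m] [Fintype n]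

/-- The derivative at the identity of the equivalence action on `F`, along `(M, S)`:
the map `(M, S) ↦ F S - M F`. The sign on `M` makes `(1, 1)` act trivially. -/
def equivDeriv (F : Matrix m n R) : Matrix m m R × Matrix n n R →ₗ[R] Matrix m n R where
  toFun x := F * x.2 - x.1 * F
  map_add' x y := by
    simp only [Prod.fst_add, Prod.snd_add, Matrix.mul_add, Matrix.add_mul]
    abel
  map_smul' c x := by
    simp only [Prod.smul_fst, Prod.smul_snd, Matrix.mul_smul, Matrix.smul_mul, smul_sub,
      RingHom.id_apply]

lemma equivDeriv_apply (F : Matrix m n R) (x : Matrix m m R × Matrix n n R) :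
    equivDeriv F x = F * x.2 - x.1 * F := rfl

/-- The stabilizer, under infinitesimal equivalence, of the pencil spanned by `F` and `G`: the
analogue of `stabAlg` for rectangular matrices. -/
def equivStab (F G : Matrix m n R) : Submodule R (Matrix m m R × Matrix n n R) :=
  (Submodule.span R {F, G}).comap (equivDeriv F) ⊓ (Submodule.span R {F, G}).comap (equivDeriv G)

end Equivalence

lemma map_mem_span_pair_iff {R M N : Type*} [Semiring R] [AddCommMonoid M] [AddCommMonoid N]
    [Module R M] [Module R N] {f : M →ₗ[R] N} (hf : Function.Injective f) {x y z : M} :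
    f z ∈ Submodule.span R {f x, f y} ↔ z ∈ Submodule.span R {x, y} := by
  rw [← Set.image_pair, ← Submodule.map_span, Submodule.mem_map]
  exact hf.mem_set_image

section Blocks

variable {R m n : Type*} [CommRing R]

/-- The symmetric matrix with off-diagonal blocks `F` and `Fᵀ`. -/
def offDiag : Matrix m n R →ₗ[R] Matrix (m ⊕ n) (m ⊕ n) R where
  toFun F := fromBlocks 0 F Fᵀ 0
  map_add' F G := by simp [fromBlocks_add]
  map_smul' c F := by simp [fromBlocks_smul]

lemma offDiag_apply (F : Matrix m n R) : offDiag F = fromBlocks 0 F Fᵀ 0 := rfl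

lemma offDiag_injective : Function.Injective (offDiag : Matrix m n R →ₗ[R] _) :=
  fun _ _ h => (fromBlocks_inj.mp h).2.1

/-- The block-diagonal matrix `diag(-Mᵀ, S)`. It acts on the first summand by the contragredient of
`M`, so that congruence of `offDiag F` becomes equivalence of `F`. -/
def contragredientSum :
    (Matrix m m R × Matrix n n R) →ₗ[R] Matrix (m ⊕ n) (m ⊕ n) R where
  toFun x := fromBlocks (-x.1ᵀ) 0 0 x.2
  map_add' x y := by simp [fromBlocks_add, add_comm]
  map_smul' c x := by simp [fromBlocks_smul]

lemma contragredientSum_apply (x : Matrix m m R × Matrix n n R) :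
    contragredientSum x = fromBlocks (-x.1ᵀ) 0 0 x.2 := rfl

lemma contragredientSum_injective :
    Function.Injective (contragredientSum : Matrix m m R × Matrix n n R →ₗ[R] _) := by
  intro x y h
  obtain ⟨h₁, -, -, h₂⟩ := fromBlocks_inj.mp h
  exact Prod.ext (transpose_injective (neg_injective h₁)) h₂

lemma lie_contragredientSum [Fintype m] [Fintype n]
    (x y : Matrix m m R × Matrix n n R) :
    ⁅contragredientSum x, contragredientSum y⁆ = contragredientSum ⁅x, y⁆ := by
  simp [contragredientSum_apply, Ring.lie_def, fromBlocks_multiply, sub_eq_add_neg, fromBlocks_neg,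
    fromBlocks_add, add_comm]

lemma skew_mul_transpose_of_skew_transpose_mul [Fintype m] [Fintype n] [DecidableEq m]
    {F Q : Matrix m n R} (hF : F * Fᵀ = 1) (hQ : (Fᵀ * Q)ᵀ = -(Fᵀ * Q)) :
    (F * Qᵀ)ᵀ = -(F * Qᵀ) :=
  calc (F * Qᵀ)ᵀ = F * (Fᵀ * Q) * Fᵀ := by
        rw [← Matrix.mul_assoc, hF, Matrix.one_mul, transpose_mul, transpose_transpose]
    _ = -(F * (Fᵀ * Q)ᵀ * Fᵀ) := by rw [hQ, Matrix.mul_neg, Matrix.neg_mul, neg_neg]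
    _ = -(F * Qᵀ) := by
      rw [transpose_mul, transpose_transpose, Matrix.mul_assoc, Matrix.mul_assoc, hF,
        Matrix.mul_one]

end Blocks

section Congruence

variable {m n : Type*} [Fintype m] [Fintype n]

lemma congrDeriv_apply (M X : Matrix n n ℂ) : congrDeriv M X = Xᵀ * M + M * X := rfl

lemma congrDeriv_offDiag_fromBlocks (F : Matrix m n ℂ) (P : Matrix m m ℂ) (Q : Matrix m n ℂ)
    (Z : Matrix n m ℂ) (S : Matrix n n ℂ) :
    congrDeriv (offDiag F) (fromBlocks P Q Z S) =
      fromBlocks ((F * Z)ᵀ + F * Z) (Pᵀ * F + F * S) ((Pᵀ * F + F * S)ᵀ)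
        ((Fᵀ * Q)ᵀ + Fᵀ * Q) := by
  simp [congrDeriv_apply, offDiag_apply, fromBlocks_transpose, fromBlocks_multiply,
    fromBlocks_add, add_comm]

lemma congrDeriv_offDiag_contragredientSum (F : Matrix m n ℂ) (x : Matrix m m ℂ × Matrix n n ℂ) :
    congrDeriv (offDiag F) (contragredientSum x) = offDiag (equivDeriv F x) := by
  rw [contragredientSum_apply, congrDeriv_offDiag_fromBlocks, offDiag_apply, equivDeriv_apply]
  simp [sub_eq_neg_add]

lemma contragredientSum_mem_stabAlg_iff {F G : Matrix m n ℂ} {x : Matrix m m ℂ × Matrix n n ℂ} :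
    contragredientSum x ∈ stabAlg (offDiag F) (offDiag G) ↔ x ∈ equivStab F G := by
  simp only [stabAlg, equivStab, Submodule.mem_inf, Submodule.mem_comap,
    congrDeriv_offDiag_contragredientSum, map_mem_span_pair_iff offDiag_injective]

lemma skew_of_congrDeriv_offDiag_mem_span {F G H : Matrix m n ℂ} {P : Matrix m m ℂ}
    {Q : Matrix m n ℂ} {Z : Matrix n m ℂ} {S : Matrix n n ℂ}
    (h : congrDeriv (offDiag F) (fromBlocks P Q Z S) ∈ Submodule.span ℂ {offDiag G, offDiag H}) :
    (F * Z)ᵀ = -(F * Z) ∧ (Fᵀ * Q)ᵀ = -(Fᵀ * Q) := by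
  obtain ⟨a, b, h⟩ := Submodule.mem_span_pair.mp h
  rw [← map_smul, ← map_smul, ← map_add, offDiag_apply, congrDeriv_offDiag_fromBlocks,
    fromBlocks_inj] at h
  exact ⟨eq_neg_of_add_eq_zero_left h.1.symm, eq_neg_of_add_eq_zero_left h.2.2.2.symm⟩

lemma stabAlg_offDiag_kronecker (r : ℕ) :
    stabAlg (offDiag (kroneckerLeft ℂ r)) (offDiag (kroneckerRight ℂ r)) =
      (equivStab (kroneckerLeft ℂ r) (kroneckerRight ℂ r)).map contragredientSum := by
  ext X
  constructor
  · intro hX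
    obtain ⟨hL, hR⟩ := hX
    obtain ⟨P, Q, Z, S, rfl⟩ : ∃ P Q Z S, X = fromBlocks P Q Z S :=
      ⟨_, _, _, _, (fromBlocks_toBlocks X).symm⟩
    obtain ⟨hLZ, hLQ⟩ := skew_of_congrDeriv_offDiag_mem_span hL
    obtain ⟨hRZ, hRQ⟩ := skew_of_congrDeriv_offDiag_mem_span hR
    obtain rfl : Z = 0 := eq_zero_of_kronecker_mul_skew hLZ hRZ
    obtain rfl : Q = 0 := transpose_eq_zero.mp <| eq_zero_of_kronecker_mul_skew
      (skew_mul_transpose_of_skew_transpose_mul kroneckerLeft_mul_transpose_self hLQ)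
      (skew_mul_transpose_of_skew_transpose_mul kroneckerRight_mul_transpose_self hRQ)
    have hPS : contragredientSum (-Pᵀ, S) = fromBlocks P 0 0 S := by
      simp [contragredientSum_apply]
    rw [← hPS]
    exact Submodule.mem_map_of_mem (contragredientSum_mem_stabAlg_iff.mp (hPS ▸ ⟨hL, hR⟩))
  · rintro ⟨x, hx, rfl⟩
    exact contragredientSum_mem_stabAlg_iff.mpr hx

lemma stabAlg_reindex (e : m ≃ n) (A B : Matrix m m ℂ) :
    stabAlg (reindex e e A) (reindex e e B) =
      (stabAlg A B).map (reindexLinearEquiv ℂ ℂ e e).toLinearMap := by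
  have congrDeriv_reindex (M X : Matrix m m ℂ) :
      congrDeriv (reindex e e M) (reindexLinearEquiv ℂ ℂ e e X) =
        reindexLinearEquiv ℂ ℂ e e (congrDeriv M X) := by
    simp only [congrDeriv_apply, map_add, coe_reindexLinearEquiv, reindex_apply,
      transpose_submatrix, submatrix_mul_equiv]
  have mem_span_iff (Y : Matrix m m ℂ) :
      reindexLinearEquiv ℂ ℂ e e Y ∈ Submodule.span ℂ {reindex e e A, reindex e e B} ↔
        Y ∈ Submodule.span ℂ {A, B} :=
    map_mem_span_pair_iff (reindexLinearEquiv ℂ ℂ e e).injective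
      (f := (reindexLinearEquiv ℂ ℂ e e).toLinearMap)
  ext X
  obtain ⟨X, rfl⟩ := (reindexLinearEquiv ℂ ℂ e e).surjective X
  simp only [stabAlg, Submodule.mem_inf, Submodule.mem_comap, congrDeriv_reindex, mem_span_iff,
    Submodule.mem_map_equiv, LinearEquiv.symm_apply_apply]

end Congruence

section CorankOne

/-- The splitting of the `2r + 1` indices into the first `r` and the last `r + 1`. -/
def corankOneEquiv (r : ℕ) : Fin r ⊕ Fin (r + 1) ≃ Fin (2 * r + 1) :=
  finSumFinEquiv.trans (finCongr (by omega))

lemma val_corankOneEquiv_inl {r : ℕ} (p : Fin r) : (corankOneEquiv r (.inl p) : ℕ) = p := by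
  simp [corankOneEquiv]

lemma val_corankOneEquiv_inr {r : ℕ} (p : Fin (r + 1)) :
    (corankOneEquiv r (.inr p) : ℕ) = r + p := by
  simp [corankOneEquiv]

lemma corankOneA_eq_reindex (r : ℕ) :
    corankOneA r =
      reindex (corankOneEquiv r) (corankOneEquiv r) (offDiag (kroneckerLeft ℂ r)) := by
  rw [← Equiv.symm_apply_eq]
  ext (p | p) (q | q) <;>
    simp only [reindex_symm, reindex_apply, Equiv.symm_symm, submatrix_apply, corankOneA,
      of_apply, val_corankOneEquiv_inl, val_corankOneEquiv_inr, offDiag_apply, fromBlocks_apply₁₁,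
      fromBlocks_apply₁₂, fromBlocks_apply₂₁, fromBlocks_apply₂₂, Matrix.zero_apply,
      transpose_apply, kroneckerLeft_apply, Fin.ext_iff, Fin.val_castSucc] <;>
    grind

lemma corankOneB_eq_reindex (r : ℕ) :
    corankOneB r =
      reindex (corankOneEquiv r) (corankOneEquiv r) (offDiag (kroneckerRight ℂ r)) := by
  rw [← Equiv.symm_apply_eq]
  ext (p | p) (q | q) <;>
    simp only [reindex_symm, reindex_apply, Equiv.symm_symm, submatrix_apply, corankOneB,
      of_apply, val_corankOneEquiv_inl, val_corankOneEquiv_inr, offDiag_apply, fromBlocks_apply₁₁,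
      fromBlocks_apply₁₂, fromBlocks_apply₂₁, fromBlocks_apply₂₂, Matrix.zero_apply,
      transpose_apply, kroneckerRight_apply, Fin.ext_iff, Fin.val_succ] <;>
    grind

end CorankOne

section Representation

variable (R : Type*) [CommRing R] (r : ℕ)

/-- The raising operator of `𝔰𝔩₂`, acting on both sides of the Kronecker block. -/
def kroneckerE : Matrix (Fin r) (Fin r) R × Matrix (Fin (r + 1)) (Fin (r + 1)) R :=
  (sl2E R r, sl2E R (r + 1))

/-- The lowering operator of `𝔰𝔩₂`, acting on both sides of the Kronecker block. -/
def kroneckerF : Matrix (Fin r) (Fin r) R × Matrix (Fin (r + 1)) (Fin (r + 1)) R :=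
  (sl2F R r, sl2F R (r + 1))

/-- The weight operator of `𝔰𝔩₂`, acting on both sides of the Kronecker block. -/
def kroneckerH : Matrix (Fin r) (Fin r) R × Matrix (Fin (r + 1)) (Fin (r + 1)) R :=
  (sl2H R r, sl2H R (r + 1))

lemma lie_kroneckerE_kroneckerF : ⁅kroneckerE R r, kroneckerF R r⁆ = kroneckerH R r :=
  Prod.ext (lie_sl2E_sl2F R r) (lie_sl2E_sl2F R (r + 1))

lemma lie_kroneckerH_kroneckerE : ⁅kroneckerH R r, kroneckerE R r⁆ = (2 : R) • kroneckerE R r :=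
  Prod.ext (lie_sl2H_sl2E R r) (lie_sl2H_sl2E R (r + 1))

lemma lie_kroneckerH_kroneckerF : ⁅kroneckerH R r, kroneckerF R r⁆ = -((2 : R) • kroneckerF R r) :=
  Prod.ext (lie_sl2H_sl2F R r) (lie_sl2H_sl2F R (r + 1))

@[simp]
lemma equivDeriv_kroneckerLeft_kroneckerE :
    equivDeriv (kroneckerLeft R r) (kroneckerE R r) = kroneckerRight R r := by
  ext i j
  rw [equivDeriv_apply, Matrix.sub_apply]
  cases j using Fin.lastCases with
  | last => simp +contextual [kroneckerE, sl2E, kroneckerRight_apply, Fin.ext_iff]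
  | cast j =>
    simp only [kroneckerE, sl2E, kroneckerLeft_mul_apply, mul_kroneckerLeft_castSucc,
      kroneckerRight_apply, of_apply, Fin.ext_iff, Fin.val_succ, Fin.val_castSucc]
    split_ifs <;> simp

@[simp]
lemma equivDeriv_kroneckerRight_kroneckerE :
    equivDeriv (kroneckerRight R r) (kroneckerE R r) = 0 := by
  ext i j
  rw [equivDeriv_apply, Matrix.sub_apply]
  cases j using Fin.cases <;> simp [kroneckerE, sl2E]

@[simp]
lemma equivDeriv_kroneckerLeft_kroneckerF :
    equivDeriv (kroneckerLeft R r) (kroneckerF R r) = 0 := by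
  ext i j
  rw [equivDeriv_apply, Matrix.sub_apply]
  cases j using Fin.lastCases with
  | last => simp [kroneckerF, sl2F, (Nat.lt_succ_of_lt i.isLt).ne]
  | cast j => simp [kroneckerF, sl2F]

@[simp]
lemma equivDeriv_kroneckerRight_kroneckerF :
    equivDeriv (kroneckerRight R r) (kroneckerF R r) = kroneckerLeft R r := by
  ext i j
  rw [equivDeriv_apply, Matrix.sub_apply]
  cases j using Fin.cases with
  | zero => simp +contextual [kroneckerF, sl2F, kroneckerLeft_apply, Fin.ext_iff]
  | succ j =>
    simp only [kroneckerF, sl2F, kroneckerRight_mul_apply, mul_kroneckerRight_succ,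
      kroneckerLeft_apply, of_apply, Fin.ext_iff, Fin.val_succ, Fin.val_castSucc, add_left_inj]
    split_ifs <;> simp

@[simp]
lemma equivDeriv_kroneckerLeft_kroneckerH :
    equivDeriv (kroneckerLeft R r) (kroneckerH R r) = kroneckerLeft R r := by
  ext i j
  simp only [equivDeriv_apply, Matrix.sub_apply, kroneckerH, sl2H, mul_diagonal, diagonal_mul,
    kroneckerLeft_apply]
  split_ifs with h
  · rw [← h, Fin.val_castSucc]
    push_cast
    ring
  · ring

@[simp]
lemma equivDeriv_kroneckerRight_kroneckerH :
    equivDeriv (kroneckerRight R r) (kroneckerH R r) = -kroneckerRight R r := by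
  ext i j
  simp only [equivDeriv_apply, Matrix.sub_apply, Matrix.neg_apply, kroneckerH, sl2H, mul_diagonal,
    diagonal_mul, kroneckerRight_apply]
  split_ifs with h
  · rw [← h, Fin.val_succ]
    push_cast
    ring
  · ring

variable {R} {m n : Type*} [Fintype m] [Fintype n]

@[simp]
lemma equivDeriv_neg_one_zero [DecidableEq m] (F : Matrix m n R) : equivDeriv F (-1, 0) = F := by
  simp [equivDeriv_apply]

@[simp]
lemma equivDeriv_zero_one [DecidableEq n] (F : Matrix m n R) : equivDeriv F (0, 1) = F := by
  simp [equivDeriv_apply]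

end Representation

section Spanning

variable {K : Type*} [Field K] [CharZero K] {r : ℕ}

lemma mem_span_of_mem_equivStab_kronecker
    {x : Matrix (Fin r) (Fin r) K × Matrix (Fin (r + 1)) (Fin (r + 1)) K}
    (hx : x ∈ equivStab (kroneckerLeft K r) (kroneckerRight K r)) :
    x ∈ Submodule.span K {(-1, 0), (0, 1), kroneckerE K r, kroneckerF K r, kroneckerH K r} := by
  obtain ⟨a, b, hL⟩ := Submodule.mem_span_pair.mp hx.1
  obtain ⟨c, d, hR⟩ := Submodule.mem_span_pair.mp hx.2
  set y := x - (b • kroneckerE K r + c • kroneckerF K r + ((a - d) / 2) • kroneckerH K r +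
    ((a + d) / 2) • (0, 1)) with hy
  have hyL : equivDeriv (kroneckerLeft K r) y = 0 := by
    simp only [hy, map_sub, map_add, map_smul, equivDeriv_kroneckerLeft_kroneckerE,
      equivDeriv_kroneckerLeft_kroneckerF, equivDeriv_kroneckerLeft_kroneckerH,
      equivDeriv_zero_one, ← hL]
    module
  have hyR : equivDeriv (kroneckerRight K r) y = 0 := by
    simp only [hy, map_sub, map_add, map_smul, equivDeriv_kroneckerRight_kroneckerE,
      equivDeriv_kroneckerRight_kroneckerF, equivDeriv_kroneckerRight_kroneckerH,
      equivDeriv_zero_one, ← hR]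
    module
  obtain ⟨h₁, h₂⟩ := eq_smul_one_of_kronecker_intertwine (sub_eq_zero.mp hyL) (sub_eq_zero.mp hyR)
  have hy_scalar : y = y.2 0 0 • (0, 1) - y.2 0 0 • (-1, 0) :=
    Prod.ext (by simpa using h₁) (by simpa using h₂)
  have hx_eq : x = -y.2 0 0 • (-1, 0) + ((a + d) / 2 + y.2 0 0) • (0, 1) + b • kroneckerE K r +
      c • kroneckerF K r + ((a - d) / 2) • kroneckerH K r := by
    rw [eq_add_of_sub_eq hy.symm]
    nth_rw 1 [hy_scalar]
    module
  rw [hx_eq]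
  refine add_mem (add_mem (add_mem (add_mem ?_ ?_) ?_) ?_) ?_ <;>
    exact Submodule.smul_mem _ _ (Submodule.mem_span_of_mem (by simp))

lemma equivStab_kronecker :
    equivStab (kroneckerLeft K r) (kroneckerRight K r) =
      Submodule.span K {(-1, 0), (0, 1), kroneckerE K r, kroneckerF K r, kroneckerH K r} := by
  refine le_antisymm (fun x hx => mem_span_of_mem_equivStab_kronecker hx) (Submodule.span_le.mpr ?_)
  have hL : kroneckerLeft K r ∈ Submodule.span K {kroneckerLeft K r, kroneckerRight K r} :=
    Submodule.mem_span_of_mem (by simp)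
  have hR : kroneckerRight K r ∈ Submodule.span K {kroneckerLeft K r, kroneckerRight K r} :=
    Submodule.mem_span_of_mem (by simp)
  rintro _ (rfl | rfl | rfl | rfl | rfl) <;> constructor <;> simp [hL, hR]

end Spanning

section Relations

lemma lie_smul_add_of_commute {K A : Type*} [CommRing K] [Ring A] [Algebra K A] {h x z : A}
    {c : K} (hx : ⁅h, x⁆ = c • x) (hz : Commute z x) (a : K) :
    ⁅a • h + z, x⁆ = (a * c) • x := by
  rw [Ring.lie_def, add_mul, mul_add, smul_mul_assoc, mul_smul_comm, hz.eq,
    add_sub_add_right_eq_sub, ← smul_sub, ← Ring.lie_def, hx, smul_smul]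

variable (K : Type*) [Field K] (r : ℕ)

/-- The basis vector `C₁`. It is half the weight operator plus a central element, which is what
makes its brackets with `e` and `f` equal to `e` and `-f`. -/
def kroneckerC₁ : Matrix (Fin r) (Fin r) K × Matrix (Fin (r + 1)) (Fin (r + 1)) K :=
  (2⁻¹ : K) • kroneckerH K r + (-1, 0)

/-- The basis vector `C₂`, the counterpart of `kroneckerC₁` with the opposite weights. -/
def kroneckerC₂ : Matrix (Fin r) (Fin r) K × Matrix (Fin (r + 1)) (Fin (r + 1)) K :=
  (-2⁻¹ : K) • kroneckerH K r + (0, 1)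

variable {K r}

lemma lie_kroneckerC₁ {c : K}
    {x : Matrix (Fin r) (Fin r) K × Matrix (Fin (r + 1)) (Fin (r + 1)) K}
    (hx : ⁅kroneckerH K r, x⁆ = c • x) : ⁅kroneckerC₁ K r, x⁆ = (2⁻¹ * c) • x :=
  lie_smul_add_of_commute hx (Prod.ext (by simp) (by simp)) _

lemma lie_kroneckerC₂ {c : K}
    {x : Matrix (Fin r) (Fin r) K × Matrix (Fin (r + 1)) (Fin (r + 1)) K}
    (hx : ⁅kroneckerH K r, x⁆ = c • x) : ⁅kroneckerC₂ K r, x⁆ = (-2⁻¹ * c) • x :=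
  lie_smul_add_of_commute hx (Prod.ext (by simp) (by simp)) _

lemma lie_kroneckerH_self : ⁅kroneckerH K r, kroneckerH K r⁆ = (0 : K) • kroneckerH K r := by
  rw [zero_smul, (Commute.refl _).lie_eq]

lemma lie_kroneckerC₁_kroneckerH : ⁅kroneckerC₁ K r, kroneckerH K r⁆ = 0 := by
  rw [lie_kroneckerC₁ lie_kroneckerH_self, mul_zero, zero_smul]

lemma lie_kroneckerC₂_kroneckerH : ⁅kroneckerC₂ K r, kroneckerH K r⁆ = 0 := by
  rw [lie_kroneckerC₂ lie_kroneckerH_self, mul_zero, zero_smul]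

lemma lie_kroneckerC₁_kroneckerC₂ : ⁅kroneckerC₁ K r, kroneckerC₂ K r⁆ = 0 := by
  have hc : Commute (kroneckerH K r) (0, 1) := Prod.ext (by simp) (by simp)
  have hH : ⁅kroneckerH K r, kroneckerC₂ K r⁆ = (0 : K) • kroneckerC₂ K r := by
    rw [zero_smul, kroneckerC₂, (((Commute.refl _).smul_right _).add_right hc).lie_eq]
  rw [lie_kroneckerC₁ hH, mul_zero, zero_smul]

variable [CharZero K]

lemma lie_kroneckerC₁_kroneckerE : ⁅kroneckerC₁ K r, kroneckerE K r⁆ = kroneckerE K r := by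
  simp [lie_kroneckerC₁ (lie_kroneckerH_kroneckerE K r)]

lemma lie_kroneckerC₂_kroneckerE : ⁅kroneckerC₂ K r, kroneckerE K r⁆ = -kroneckerE K r := by
  simp [lie_kroneckerC₂ (lie_kroneckerH_kroneckerE K r)]

lemma lie_kroneckerC₁_kroneckerF : ⁅kroneckerC₁ K r, kroneckerF K r⁆ = -kroneckerF K r := by
  simp [lie_kroneckerC₁ ((lie_kroneckerH_kroneckerF K r).trans (neg_smul _ _).symm)]

lemma lie_kroneckerC₂_kroneckerF : ⁅kroneckerC₂ K r, kroneckerF K r⁆ = kroneckerF K r := by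
  simp [lie_kroneckerC₂ ((lie_kroneckerH_kroneckerF K r).trans (neg_smul _ _).symm)]

end Relations

section Basis

variable {K : Type*} [Field K] [CharZero K]

lemma span_kronecker_basis (r : ℕ) :
    Submodule.span K
        {kroneckerC₁ K r, kroneckerC₂ K r, kroneckerE K r, kroneckerF K r, kroneckerH K r} =
      equivStab (kroneckerLeft K r) (kroneckerRight K r) := by
  rw [equivStab_kronecker]
  apply le_antisymm <;> rw [Submodule.span_le]
  · have hH : kroneckerH K r ∈
        Submodule.span K {(-1, 0), (0, 1), kroneckerE K r, kroneckerF K r, kroneckerH K r} :=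
      Submodule.mem_span_of_mem (by simp)
    rintro _ (rfl | rfl | rfl | rfl | rfl)
    · exact add_mem (Submodule.smul_mem _ _ hH) (Submodule.mem_span_of_mem (by simp))
    · exact add_mem (Submodule.smul_mem _ _ hH) (Submodule.mem_span_of_mem (by simp))
    all_goals exact Submodule.mem_span_of_mem (by simp)
  · have hH : kroneckerH K r ∈ Submodule.span K
        {kroneckerC₁ K r, kroneckerC₂ K r, kroneckerE K r, kroneckerF K r, kroneckerH K r} :=
      Submodule.mem_span_of_mem (by simp)
    rintro _ (rfl | rfl | rfl | rfl | rfl)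
    · rw [SetLike.mem_coe, ← add_mem_cancel_left (Submodule.smul_mem _ (2⁻¹ : K) hH)]
      exact Submodule.mem_span_of_mem (by simp [kroneckerC₁])
    · rw [SetLike.mem_coe, ← add_mem_cancel_left (Submodule.smul_mem _ (-2⁻¹ : K) hH)]
      exact Submodule.mem_span_of_mem (by simp [kroneckerC₂])
    all_goals exact Submodule.mem_span_of_mem (by simp)

lemma linearIndependent_one_sl2H_sl2E_sl2F {n : ℕ} (hn : 2 ≤ n) :
    LinearIndependent K ![1, sl2H K n, sl2E K n, sl2F K n] := by
  obtain ⟨n, rfl⟩ := Nat.exists_eq_add_of_le' hn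
  rw [Fintype.linearIndependent_iff]
  intro g hg
  rw [Fin.sum_univ_four] at hg
  have h₀₀ : g 0 + g 1 * (n + 2 - 1) = 0 := by simpa [sl2E, sl2F, sl2H] using congr_fun₂ hg 0 0
  have h₁₁ : g 0 + g 1 * (n + 2 - 1 - 2) = 0 := by
    simpa [sl2E, sl2F, sl2H] using congr_fun₂ hg 1 1
  have h₀₁ : g 2 * (n + 1) = 0 := by
    simpa [sl2E, sl2F, sl2H, add_sub_assoc, show (2 : K) - 1 = 1 by norm_num] using
      congr_fun₂ hg 0 1
  have h₁₀ : g 3 = 0 := by simpa [sl2E, sl2F, sl2H] using congr_fun₂ hg 1 0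
  have h₁ : g 1 = 0 := by linear_combination (h₀₀ - h₁₁) / 2
  have h₀ : g 0 = 0 := by simpa [h₁] using h₀₀
  have h₂ : g 2 = 0 := (mul_eq_zero.mp h₀₁).resolve_right (Nat.cast_add_one_ne_zero n)
  intro i
  fin_cases i <;> assumption

lemma linearIndependent_kronecker_basis {r : ℕ} (hr : 1 ≤ r) :
    LinearIndependent K
      ![kroneckerC₁ K r, kroneckerC₂ K r, kroneckerE K r, kroneckerF K r, kroneckerH K r] := by
  rw [Fintype.linearIndependent_iff]
  intro g hg
  simp only [Fin.sum_univ_five, Fin.isValue, cons_val] at hg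
  let w := g 0 / 2 - g 1 / 2 + g 4
  have hfst : -g 0 • (1 : Matrix (Fin r) (Fin r) K) + w • sl2H K r + g 2 • sl2E K r +
      g 3 • sl2F K r = 0 := by
    refine Eq.trans ?_ (congrArg Prod.fst hg)
    simp only [kroneckerC₁, kroneckerC₂, kroneckerE, kroneckerF, kroneckerH, Prod.smul_mk,
      Prod.mk_add_mk, w]
    module
  have hsnd : g 1 • (1 : Matrix (Fin (r + 1)) (Fin (r + 1)) K) + w • sl2H K (r + 1) +
      g 2 • sl2E K (r + 1) + g 3 • sl2F K (r + 1) = 0 := by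
    refine Eq.trans ?_ (congrArg Prod.snd hg)
    simp only [kroneckerC₁, kroneckerC₂, kroneckerE, kroneckerF, kroneckerH, Prod.smul_mk,
      Prod.mk_add_mk, w]
    module
  have hzero := Fintype.linearIndependent_iff.mp
    (linearIndependent_one_sl2H_sl2E_sl2F (K := K) (by omega : 2 ≤ r + 1)) ![g 1, w, g 2, g 3]
    (by simpa [Fin.sum_univ_four] using hsnd)
  have h₁ : g 1 = 0 := hzero 0
  have hw : w = 0 := hzero 1
  have h₂ : g 2 = 0 := hzero 2
  have h₃ : g 3 = 0 := hzero 3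
  have h₀ : g 0 = 0 := by
    have : NeZero r := ⟨by omega⟩
    simpa [hw, h₂, h₃] using hfst
  have h₄ : g 4 = 0 := by simpa [w, h₀, h₁] using hw
  intro i
  fin_cases i <;> assumption

end Basis

section BlockEmbedding

/-- The embedding of `𝔤𝔩_r × 𝔤𝔩_{r+1}` as block-diagonal matrices of size `2r + 1`, through which
equivalence of the Kronecker block becomes congruence of the corank-one pencil. -/
noncomputable def blockEmbedding (r : ℕ) :
    Matrix (Fin r) (Fin r) ℂ × Matrix (Fin (r + 1)) (Fin (r + 1)) ℂ →ₗ[ℂ]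
      Matrix (Fin (2 * r + 1)) (Fin (2 * r + 1)) ℂ :=
  (reindexLinearEquiv ℂ ℂ (corankOneEquiv r) (corankOneEquiv r)).toLinearMap ∘ₗ contragredientSum

lemma blockEmbedding_injective (r : ℕ) : Function.Injective (blockEmbedding r) :=
  (reindexLinearEquiv ℂ ℂ (corankOneEquiv r) (corankOneEquiv r)).injective.comp
    contragredientSum_injective

lemma lie_blockEmbedding {r : ℕ}
    (x y : Matrix (Fin r) (Fin r) ℂ × Matrix (Fin (r + 1)) (Fin (r + 1)) ℂ) :
    ⁅blockEmbedding r x, blockEmbedding r y⁆ = blockEmbedding r ⁅x, y⁆ := by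
  rw [blockEmbedding, LinearMap.comp_apply, LinearMap.comp_apply, LinearMap.comp_apply,
    ← lie_contragredientSum]
  simp only [Ring.lie_def, map_sub, LinearEquiv.coe_coe, coe_reindexLinearEquiv, reindex_apply,
    submatrix_mul_equiv]

lemma stabAlg_corankOne (r : ℕ) :
    stabAlg (corankOneA r) (corankOneB r) =
      (equivStab (kroneckerLeft ℂ r) (kroneckerRight ℂ r)).map (blockEmbedding r) := by
  rw [corankOneA_eq_reindex, corankOneB_eq_reindex, stabAlg_reindex, stabAlg_offDiag_kronecker,
    blockEmbedding, Submodule.map_comp]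

lemma span_blockEmbedding_kronecker_basis (r : ℕ) :
    Submodule.span ℂ {blockEmbedding r (kroneckerC₁ ℂ r), blockEmbedding r (kroneckerC₂ ℂ r),
      blockEmbedding r (kroneckerE ℂ r), blockEmbedding r (kroneckerF ℂ r),
      blockEmbedding r (kroneckerH ℂ r)} = stabAlg (corankOneA r) (corankOneB r) := by
  rw [stabAlg_corankOne, ← span_kronecker_basis, Submodule.map_span]
  simp only [Set.image_insert_eq, Set.image_singleton]

lemma linearIndependent_blockEmbedding_kronecker_basis {r : ℕ} (hr : 1 ≤ r) :
    LinearIndependent ℂ ![blockEmbedding r (kroneckerC₁ ℂ r), blockEmbedding r (kroneckerC₂ ℂ r),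
      blockEmbedding r (kroneckerE ℂ r), blockEmbedding r (kroneckerF ℂ r),
      blockEmbedding r (kroneckerH ℂ r)] := by
  have h := (linearIndependent_kronecker_basis (K := ℂ) hr).map' (blockEmbedding r)
    (LinearMap.ker_eq_bot.mpr (blockEmbedding_injective r))
  simpa only [vecCons, Fin.comp_cons, Matrix.empty_eq] using h

end BlockEmbedding

/-- The 5-dimensional Lie algebra of the stabilizer of the
corank-one canonical pencil is isomorphic to `𝔰𝔩₂ ⋉ ℂ²`: concretely, it admits a
ℂ-basis `C₁, C₂, 𝒳, 𝒴, 𝒵` satisfying the commutator relations `[C₁,C₂] = 0`,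
`[𝒳,𝒴] = 𝒵`, `[𝒵,𝒳] = 2𝒳`, `[𝒵,𝒴] = −2𝒴`, `[C₁,𝒳] = 𝒳 = −[C₂,𝒳]`,
`[C₁,𝒴] = −𝒴 = −[C₂,𝒴]`, `[C₁,𝒵] = [C₂,𝒵] = 0`. -/
theorem corankOne_stabilizer_sl2_semidirect (r : ℕ) (hr : 1 ≤ r) :
    ∃ C₁ C₂ 𝒳 𝒴 𝒵 : Matrix (Fin (2 * r + 1)) (Fin (2 * r + 1)) ℂ,
      C₁ ∈ stabAlg (corankOneA r) (corankOneB r) ∧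
      C₂ ∈ stabAlg (corankOneA r) (corankOneB r) ∧
      𝒳 ∈ stabAlg (corankOneA r) (corankOneB r) ∧
      𝒴 ∈ stabAlg (corankOneA r) (corankOneB r) ∧
      𝒵 ∈ stabAlg (corankOneA r) (corankOneB r) ∧
      LinearIndependent ℂ ![C₁, C₂, 𝒳, 𝒴, 𝒵] ∧
      Submodule.span ℂ {C₁, C₂, 𝒳, 𝒴, 𝒵} = stabAlg (corankOneA r) (corankOneB r) ∧
      C₁ * C₂ - C₂ * C₁ = 0 ∧
      𝒳 * 𝒴 - 𝒴 * 𝒳 = 𝒵 ∧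
      𝒵 * 𝒳 - 𝒳 * 𝒵 = (2 : ℂ) • 𝒳 ∧
      𝒵 * 𝒴 - 𝒴 * 𝒵 = -((2 : ℂ) • 𝒴) ∧
      C₁ * 𝒳 - 𝒳 * C₁ = 𝒳 ∧
      C₂ * 𝒳 - 𝒳 * C₂ = -𝒳 ∧
      C₁ * 𝒴 - 𝒴 * C₁ = -𝒴 ∧
      C₂ * 𝒴 - 𝒴 * C₂ = 𝒴 ∧
      C₁ * 𝒵 - 𝒵 * C₁ = 0 ∧
      C₂ * 𝒵 - 𝒵 * C₂ = 0 := by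
  have hspan := span_blockEmbedding_kronecker_basis r
  refine ⟨_, _, _, _, _, ?_, ?_, ?_, ?_, ?_,
    linearIndependent_blockEmbedding_kronecker_basis hr, hspan, ?_⟩
  iterate 5 rw [← hspan]; exact Submodule.mem_span_of_mem (by simp)
  simp only [← Ring.lie_def, lie_blockEmbedding, lie_kroneckerC₁_kroneckerC₂,
    lie_kroneckerE_kroneckerF, lie_kroneckerH_kroneckerE, lie_kroneckerH_kroneckerF,
    lie_kroneckerC₁_kroneckerE, lie_kroneckerC₂_kroneckerE, lie_kroneckerC₁_kroneckerF,
    lie_kroneckerC₂_kroneckerF, lie_kroneckerC₁_kroneckerH, lie_kroneckerC₂_kroneckerH,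
    map_zero, map_neg, map_smul, and_self]
end

section
/- Let r₁ < r₂ be positive integers, r = r₁ + r₂, and let 𝒜, ℬ be the canonical matrices of size 2r+2 associated to the partition (r₁, r₂). Then the ℂ-vector space 𝔤(𝒜,ℬ) of complex (2r+2)×(2r+2) matrices X such that both Xᵀ𝒜 + 𝒜X and Xᵀℬ + ℬX lie in the ℂ-linear span of {𝒜, ℬ} has dimension 2r₂ + 7 over ℂ. -/
open Matrix

/-- Index type of the canonical pencil associated to the partition `rr`:
pairs `(i, p)` with `i : Fin h` and `0 ≤ p ≤ 2 rᵢ`. -/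
abbrev PencilIdx (h : ℕ) (rr : Fin h → ℕ) := (i : Fin h) × Fin (2 * rr i + 1)

/-- The first canonical matrix `𝒜` of the pencil `L_{(r₁,…,r_h)}`. -/
def canA (h : ℕ) (rr : Fin h → ℕ) : Matrix (PencilIdx h rr) (PencilIdx h rr) ℂ :=
  Matrix.of fun u v =>
    if u.1 = v.1 ∧
        (((v.2 : ℕ) = (u.2 : ℕ) + rr u.1 ∧ (u.2 : ℕ) < rr u.1) ∨
         ((u.2 : ℕ) = (v.2 : ℕ) + rr u.1 ∧ (v.2 : ℕ) < rr u.1)) then 1 else 0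

/-- The second canonical matrix `ℬ` of the pencil `L_{(r₁,…,r_h)}`. -/
def canB (h : ℕ) (rr : Fin h → ℕ) : Matrix (PencilIdx h rr) (PencilIdx h rr) ℂ :=
  Matrix.of fun u v =>
    if u.1 = v.1 ∧
        (((v.2 : ℕ) = (u.2 : ℕ) + rr u.1 + 1 ∧ (u.2 : ℕ) < rr u.1) ∨
         ((u.2 : ℕ) = (v.2 : ℕ) + rr u.1 + 1 ∧ (v.2 : ℕ) < rr u.1)) then 1 else 0


/-!
Split the indices `(i, p)` of each block into the "low" ones, `p < rᵢ`, and the "high" ones,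
`rᵢ ≤ p`. Both forms pair low with high indices: `𝒜` pairs the `p`-th low index of a block with its
`p`-th high index and `ℬ` pairs it with the next one.

Acting on the span of `𝒜` and `ℬ` maps `𝔤(𝒜,ℬ)` to the `2 × 2` matrices, and this map is onto
because `gl₂` acts on the pencil through its representations on binary forms of degree `rᵢ`. This
contributes `4` to the dimension. The kernel consists of the `X` annihilating both forms, and
comparing the two systems of equations determines it block by block:
* the low–high blocks vanish;
* the high–high block `(i, j)` is Toeplitz and vanishes in its first column except at the top and in
  its last column except at the bottom, so `max (rⱼ - rᵢ + 1) 0` of its diagonals are free; it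
  determines the low–low block `(j, i)`;
* the high–low blocks are Hankel, and exchanging `i` and `j` changes their sign, which leaves
  `rᵢ + rⱼ` parameters for each pair `j < i` and none for `i = j`.
-/

open Module (finrank)

section LinearAlgebra

theorem finrank_comap_of_le_range {K V W : Type*} [DivisionRing K] [AddCommGroup V] [Module K V]
    [AddCommGroup W] [Module K W] [FiniteDimensional K V] (f : V →ₗ[K] W) {P : Submodule K W}
    (hP : P ≤ LinearMap.range f) :
    finrank K (P.comap f) = finrank K P + finrank K (LinearMap.ker f) := by
  have hker : LinearMap.ker f ≤ P.comap f := LinearMap.ker_le_comap f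
  rw [← LinearMap.finrank_range_add_finrank_ker (f.domRestrict (P.comap f)),
    LinearMap.range_domRestrict, Submodule.map_comap_eq_of_le hP, LinearMap.ker_domRestrict,
    (Submodule.comapSubtypeEquivOfLe hker).finrank_eq]

theorem finrank_submodule_prod {K V W : Type*} [DivisionRing K] [AddCommGroup V] [Module K V]
    [AddCommGroup W] [Module K W] (P : Submodule K V) (Q : Submodule K W)
    [FiniteDimensional K P] [FiniteDimensional K Q] :
    finrank K (P.prod Q) = finrank K P + finrank K Q := by
  have hrange : P.prod Q = LinearMap.range (P.subtype.prodMap Q.subtype) := by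
    rw [LinearMap.range_prodMap, P.range_subtype, Q.range_subtype]
  rw [hrange, LinearMap.finrank_range_of_inj
    (P.injective_subtype.prodMap Q.injective_subtype), Module.finrank_prod]

theorem finrank_eq_card_of_entries {K m n ι : Type*} [Field K] [Fintype ι]
    {W : Submodule K (Matrix m n K)} (u : ι → m) (v : ι → n)
    (hinj : ∀ X ∈ W, (∀ k, X (u k) (v k) = 0) → X = 0)
    (hsurj : ∀ y : ι → K, ∃ X ∈ W, ∀ k, X (u k) (v k) = y k) :
    finrank K W = Fintype.card ι := by
  let f : W →ₗ[K] ι → K :=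
    (LinearMap.pi fun k => Matrix.entryLinearMap K K (u k) (v k)).domRestrict W
  have hf : Function.Bijective f := by
    refine ⟨LinearMap.ker_eq_bot.1 (LinearMap.ker_eq_bot'.2 fun X hX => ?_), fun y => ?_⟩
    · exact Subtype.ext (hinj X X.2 (congrFun hX))
    · obtain ⟨X, hXW, hX⟩ := hsurj y
      exact ⟨⟨X, hXW⟩, funext hX⟩
  rw [(LinearEquiv.ofBijective f hf).finrank_eq, Module.finrank_fintype_fun_eq_card]

end LinearAlgebra

section ToeplitzHankel

variable {α : Type*} {m n : ℕ}

theorem eq_of_toeplitz {D : Fin (m + 1) → Fin (n + 1) → α}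
    (hD : ∀ p q, D (Fin.castSucc p) (Fin.castSucc q) = D p.succ q.succ)
    {p p' : Fin (m + 1)} {q q' : Fin (n + 1)} (h : (p : ℕ) + q' = p' + q) : D p q = D p' q' := by
  have shift (s : ℕ) : ∀ (p p' : Fin (m + 1)) (q q' : Fin (n + 1)),
      (p' : ℕ) = p + s → (q' : ℕ) = q + s → D p q = D p' q' := by
    induction s with
    | zero =>
      intro p p' q q' hp hq
      rw [Fin.ext hp, Fin.ext hq]
    | succ s ih =>
      intro p p' q q' hp hq
      rw [← ih ⟨p + 1, by omega⟩ p' ⟨q + 1, by omega⟩ q' (by grind) (by grind)]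
      exact hD ⟨p, by omega⟩ ⟨q, by omega⟩
  rcases le_total (p : ℕ) p' with hp | hp
  · exact shift (p' - p) p p' q q' (by omega) (by omega)
  · exact (shift (p - p') p' p q' q (by omega) (by omega)).symm

theorem eq_of_hankel {H : Fin (m + 1) → Fin n → α}
    (hH : ∀ (p : Fin m) (q q' : Fin n), (q' : ℕ) = q + 1 → H p.castSucc q' = H p.succ q)
    {p p' : Fin (m + 1)} {q q' : Fin n} (h : (p : ℕ) + q = p' + q') : H p q = H p' q' := by
  have shift (s : ℕ) : ∀ (p p' : Fin (m + 1)) (q q' : Fin n),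
      (p' : ℕ) = p + s → (q : ℕ) = q' + s → H p q = H p' q' := by
    induction s with
    | zero =>
      intro p p' q q' hp hq
      rw [Fin.ext hp, Fin.ext hq]
    | succ s ih =>
      intro p p' q q' hp hq
      rw [← ih ⟨p + 1, by omega⟩ p' ⟨q - 1, by omega⟩ q' (by grind) (by grind)]
      exact hH ⟨p, by omega⟩ ⟨q - 1, by omega⟩ q (by grind)
  rcases le_total (p : ℕ) p' with hp | hp
  · exact shift (p' - p) p p' q q' (by omega) (by omega)
  · exact (shift (p - p') p' p q' q (by omega) (by omega)).symm

theorem eq_zero_of_toeplitz_s13 [Zero α] {D : Fin (m + 1) → Fin (n + 1) → α}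
    (hD : ∀ p q, D (Fin.castSucc p) (Fin.castSucc q) = D p.succ q.succ)
    (hzero : ∀ p, D (Fin.succ p) 0 = 0) (hlast : ∀ p, D (Fin.castSucc p) (Fin.last n) = 0)
    (hrow : ∀ k : Fin (n + 1), (k : ℕ) + m ≤ n → D 0 k = 0) (p : Fin (m + 1)) (q : Fin (n + 1)) :
    D p q = 0 := by
  rcases lt_or_ge (q : ℕ) p with hqp | hpq
  · rw [eq_of_toeplitz hD (p' := Fin.succ ⟨p - q - 1, by omega⟩) (q' := 0) (by simp; omega)]
    exact hzero _
  rcases le_or_gt ((q : ℕ) - p + m) n with hk | hk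
  · rw [eq_of_toeplitz hD (p' := 0) (q' := ⟨q - p, by omega⟩) (by simp; omega)]
    exact hrow _ hk
  · rw [eq_of_toeplitz hD (p' := Fin.castSucc ⟨n - (q - p), by omega⟩) (q' := Fin.last n)
      (by simp; omega)]
    exact hlast _

end ToeplitzHankel

section CongruenceDerivative

variable {n : Type*} [Fintype n]

theorem congrDeriv_apply_of_isSymm {M : Matrix n n ℂ} (hM : M.IsSymm) (X : Matrix n n ℂ)
    (u v : n) : congrDeriv M X u v = (M v ᵥ* X) u + (M u ᵥ* X) v := by
  have htranspose : Xᵀ * M = (M * X)ᵀ := by rw [Matrix.transpose_mul, hM.eq]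
  simp only [congrDeriv, LinearMap.coe_mk, AddHom.coe_mk, htranspose, Matrix.add_apply,
    Matrix.transpose_apply, Matrix.mul_apply_eq_vecMul]

theorem isSymm_congrDeriv {M : Matrix n n ℂ} (hM : M.IsSymm) (X : Matrix n n ℂ) :
    (congrDeriv M X).IsSymm :=
  .ext fun u v => by simp only [congrDeriv_apply_of_isSymm hM, add_comm]

/-- The Lie algebra of the pointwise stabilizer of the pencil spanned by `A` and `B`: the
infinitesimal congruences that annihilate both forms. -/
noncomputable def isotropyAlg (A B : Matrix n n ℂ) : Submodule ℂ (Matrix n n ℂ) :=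
  LinearMap.ker (congrDeriv A) ⊓ LinearMap.ker (congrDeriv B)

theorem finrank_stabAlg_eq_four_add {A B : Matrix n n ℂ} (hAB : LinearIndependent ℂ ![A, B])
    (hlift : ∀ a b c d : ℂ, ∃ X, congrDeriv A X = a • A + b • B ∧ congrDeriv B X = c • A + d • B) :
    finrank ℂ (stabAlg A B) = 4 + finrank ℂ (isotropyAlg A B) := by
  set P : Submodule ℂ (Matrix n n ℂ) := Submodule.span ℂ {A, B} with hP
  have hrange : P.prod P ≤ LinearMap.range ((congrDeriv A).prod (congrDeriv B)) := by
    rintro ⟨S, T⟩ ⟨hS, hT⟩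
    obtain ⟨a, b, rfl⟩ := Submodule.mem_span_pair.1 hS
    obtain ⟨c, d, rfl⟩ := Submodule.mem_span_pair.1 hT
    obtain ⟨X, hA, hB⟩ := hlift a b c d
    exact ⟨X, Prod.ext hA hB⟩
  have hrank : finrank ℂ P = 2 := by
    rw [hP, ← Matrix.range_cons_cons_empty, finrank_span_eq_card hAB, Fintype.card_fin]
  calc finrank ℂ (stabAlg A B)
      = finrank ℂ ((P.prod P).comap ((congrDeriv A).prod (congrDeriv B))) := rfl
    _ = finrank ℂ P + finrank ℂ P + finrank ℂ (isotropyAlg A B) := by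
      rw [finrank_comap_of_le_range _ hrange, finrank_submodule_prod, LinearMap.ker_prod,
        isotropyAlg]
    _ = 4 + finrank ℂ (isotropyAlg A B) := by rw [hrank]

end CongruenceDerivative

namespace PencilIdx

variable {h : ℕ} {rr : Fin h → ℕ}

/-- Separates the indices `(i, p)` with `p < rᵢ` from those with `rᵢ ≤ p`; both `𝒜` and `ℬ` pair
the first kind with the second. -/
def split : PencilIdx h rr ≃ (Σ i, Fin (rr i)) ⊕ (Σ i, Fin (rr i + 1)) :=
  (Equiv.sigmaCongrRight fun i =>
    (finCongr (by omega : 2 * rr i + 1 = rr i + (rr i + 1))).trans finSumFinEquiv.symm).trans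
    (Equiv.sigmaSumDistrib _ _)

/-- The index `(i, p)` with `p < rᵢ`. -/
def lo (i : Fin h) (p : Fin (rr i)) : PencilIdx h rr := split.symm (Sum.inl ⟨i, p⟩)

/-- The index `(i, rᵢ + q)` with `q ≤ rᵢ`. -/
def hi (i : Fin h) (q : Fin (rr i + 1)) : PencilIdx h rr := split.symm (Sum.inr ⟨i, q⟩)

@[simp] theorem split_lo (i : Fin h) (p : Fin (rr i)) : split (lo i p) = Sum.inl ⟨i, p⟩ :=
  split.apply_symm_apply _

@[simp] theorem split_hi (i : Fin h) (q : Fin (rr i + 1)) : split (hi i q) = Sum.inr ⟨i, q⟩ :=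
  split.apply_symm_apply _

theorem lo_eq_mk (i : Fin h) (p : Fin (rr i)) : lo i p = ⟨i, ⟨p, by omega⟩⟩ := rfl

theorem hi_eq_mk (i : Fin h) (q : Fin (rr i + 1)) : hi i q = ⟨i, ⟨rr i + q, by omega⟩⟩ := rfl

protected theorem ext_iff {u v : PencilIdx h rr} : u = v ↔ u.1 = v.1 ∧ (u.2 : ℕ) = v.2 := by
  obtain ⟨i, p⟩ := u
  obtain ⟨j, q⟩ := v
  constructor
  · rintro ⟨⟩
    exact ⟨rfl, rfl⟩
  · rintro ⟨rfl : i = j, hpq⟩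
    exact congrArg _ (Fin.ext hpq)

theorem hi_inj {i j : Fin h} {p : Fin (rr i + 1)} {q : Fin (rr j + 1)} :
    hi i p = hi j q ↔ i = j ∧ (p : ℕ) = q := by
  simp only [PencilIdx.ext_iff, hi_eq_mk]
  grind

@[elab_as_elim]
theorem lo_hi_cases {motive : PencilIdx h rr → Prop} (u : PencilIdx h rr)
    (lo : ∀ i p, motive (lo i p)) (hi : ∀ i q, motive (hi i q)) : motive u := by
  rw [← split.symm_apply_apply u]
  rcases split u with ⟨i, p⟩ | ⟨i, q⟩
  exacts [lo i p, hi i q]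

theorem lo_ne_hi {i j : Fin h} {p : Fin (rr i)} {q : Fin (rr j + 1)} : lo i p ≠ hi j q :=
  split.symm.injective.ne Sum.inl_ne_inr

theorem matrix_ext_of_isSymm {α : Type*} {S T : Matrix (PencilIdx h rr) (PencilIdx h rr) α}
    (hS : S.IsSymm) (hT : T.IsSymm) (lo_lo : ∀ i p j q, S (lo i p) (lo j q) = T (lo i p) (lo j q))
    (lo_hi : ∀ i p j q, S (lo i p) (hi j q) = T (lo i p) (hi j q))
    (hi_hi : ∀ i p j q, S (hi i p) (hi j q) = T (hi i p) (hi j q)) : S = T := by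
  ext u v
  induction u using lo_hi_cases with
  | lo i p =>
    induction v using lo_hi_cases with
    | lo j q => exact lo_lo i p j q
    | hi j q => exact lo_hi i p j q
  | hi i p =>
    induction v using lo_hi_cases with
    | lo j q => rw [hS.apply, hT.apply, lo_hi]
    | hi j q => exact hi_hi i p j q

end PencilIdx

open PencilIdx

section CanonicalPencil

variable {h : ℕ} {rr : Fin h → ℕ}

theorem isSymm_canA (h : ℕ) (rr : Fin h → ℕ) : (canA h rr).IsSymm := by
  ext u v
  simp only [canA, of_apply, transpose_apply]
  grind

theorem isSymm_canB (h : ℕ) (rr : Fin h → ℕ) : (canB h rr).IsSymm := by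
  ext u v
  simp only [canB, of_apply, transpose_apply]
  grind

@[simp] theorem canA_lo (i : Fin h) (p : Fin (rr i)) :
    canA h rr (lo i p) = Pi.single (hi i p.castSucc) 1 := by
  ext v
  simp only [canA, of_apply, Pi.single_apply, PencilIdx.ext_iff, lo_eq_mk, hi_eq_mk,
    Fin.val_castSucc]
  grind

@[simp] theorem canA_hi_castSucc (i : Fin h) (p : Fin (rr i)) :
    canA h rr (hi i p.castSucc) = Pi.single (lo i p) 1 := by
  ext v
  simp only [canA, of_apply, Pi.single_apply, PencilIdx.ext_iff, lo_eq_mk, hi_eq_mk,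
    Fin.val_castSucc]
  grind

@[simp] theorem canA_hi_last (i : Fin h) : canA h rr (hi i (Fin.last _)) = 0 := by
  ext v
  simp only [canA, of_apply, Pi.zero_apply, hi_eq_mk, Fin.val_last]
  grind

@[simp] theorem canB_lo (i : Fin h) (p : Fin (rr i)) :
    canB h rr (lo i p) = Pi.single (hi i p.succ) 1 := by
  ext v
  simp only [canB, of_apply, Pi.single_apply, PencilIdx.ext_iff, lo_eq_mk, hi_eq_mk, Fin.val_succ]
  grind

@[simp] theorem canB_hi_succ (i : Fin h) (p : Fin (rr i)) :
    canB h rr (hi i p.succ) = Pi.single (lo i p) 1 := by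
  ext v
  simp only [canB, of_apply, Pi.single_apply, PencilIdx.ext_iff, lo_eq_mk, hi_eq_mk, Fin.val_succ]
  grind

@[simp] theorem canB_hi_zero (i : Fin h) : canB h rr (hi i 0) = 0 := by
  ext v
  simp only [canB, of_apply, Pi.zero_apply, hi_eq_mk, Fin.val_zero]
  grind

@[simp] theorem canA_hi_hi (i j : Fin h) (p : Fin (rr i + 1)) (q : Fin (rr j + 1)) :
    canA h rr (hi i p) (hi j q) = 0 := by
  simp only [canA, of_apply, hi_eq_mk]
  grind

@[simp] theorem canB_hi_hi (i j : Fin h) (p : Fin (rr i + 1)) (q : Fin (rr j + 1)) :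
    canB h rr (hi i p) (hi j q) = 0 := by
  simp only [canB, of_apply, hi_eq_mk]
  grind

theorem linearIndependent_canA_canB {i : Fin h} (hpos : 0 < rr i) :
    LinearIndependent ℂ ![canA h rr, canB h rr] := by
  rw [LinearIndependent.pair_iff]
  intro s t hst
  have hA := congrFun₂ hst (lo i ⟨0, hpos⟩) (hi i (Fin.castSucc ⟨0, hpos⟩))
  have hB := congrFun₂ hst (lo i ⟨0, hpos⟩) (hi i (Fin.succ ⟨0, hpos⟩))
  constructor
  · simpa [Pi.single_apply, hi_inj] using hA
  · simpa [Pi.single_apply, hi_inj] using hB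

theorem congrDeriv_canA_apply (X : Matrix (PencilIdx h rr) (PencilIdx h rr) ℂ)
    (u v : PencilIdx h rr) :
    congrDeriv (canA h rr) X u v = (canA h rr v ᵥ* X) u + (canA h rr u ᵥ* X) v :=
  congrDeriv_apply_of_isSymm (isSymm_canA h rr) X u v

theorem congrDeriv_canB_apply (X : Matrix (PencilIdx h rr) (PencilIdx h rr) ℂ)
    (u v : PencilIdx h rr) :
    congrDeriv (canB h rr) X u v = (canB h rr v ᵥ* X) u + (canB h rr u ᵥ* X) v :=
  congrDeriv_apply_of_isSymm (isSymm_canB h rr) X u v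

end CanonicalPencil

section GL2

variable {h : ℕ} {rr : Fin h → ℕ}

/-- The lower blocks are prescribed, and the equation for `𝒜` then dictates the upper left one. -/
theorem exists_congrDeriv_eq_of_blocks {S T : Matrix (PencilIdx h rr) (PencilIdx h rr) ℂ}
    (hS : S.IsSymm) (hT : T.IsSymm)
    (hS_lo : ∀ i p j q, S (lo i p) (lo j q) = 0) (hT_lo : ∀ i p j q, T (lo i p) (lo j q) = 0)
    (hS_hi : ∀ i p j q, S (hi i p) (hi j q) = 0) (hT_hi : ∀ i p j q, T (hi i p) (hi j q) = 0)
    {D : ∀ i j, Fin (rr i + 1) → Fin (rr j + 1) → ℂ} {H : ∀ i j, Fin (rr i + 1) → Fin (rr j) → ℂ}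
    (hD_last : ∀ i j p, D i j (Fin.castSucc p) (Fin.last _) = S (lo i p) (hi j (Fin.last _)))
    (hD_zero : ∀ i j p, D i j (Fin.succ p) 0 = T (lo i p) (hi j 0))
    (hD : ∀ i j p q, D i j (Fin.succ p) (Fin.succ q) - D i j p.castSucc q.castSucc =
      T (lo i p) (hi j q.succ) - S (lo i p) (hi j q.castSucc))
    (hH_castSucc : ∀ i j p q, H j i (Fin.castSucc q) p + H i j (Fin.castSucc p) q = 0)
    (hH_succ : ∀ i j p q, H j i (Fin.succ q) p + H i j (Fin.succ p) q = 0) :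
    ∃ X, congrDeriv (canA h rr) X = S ∧ congrDeriv (canB h rr) X = T ∧
      (∀ i j p q, X (hi i p) (hi j q) = D i j p q) ∧
      ∀ i j p q, X (hi i p) (lo j q) = H i j p q := by
  refine ⟨(fromBlocks
    (of fun u v => S (lo v.1 v.2) (hi u.1 u.2.castSucc) - D v.1 u.1 v.2.castSucc u.2.castSucc) 0
    (of fun u v => H u.1 v.1 u.2 v.2) (of fun u v => D u.1 v.1 u.2 v.2)).submatrix split split,
    ?_, ?_, fun i j p q => by simp, fun i j p q => by simp⟩
  · refine matrix_ext_of_isSymm (isSymm_congrDeriv (isSymm_canA h rr) _) hS ?_ ?_ ?_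
    · intro i p j q
      simp [congrDeriv_canA_apply, hH_castSucc, hS_lo]
    · intro i p j q
      induction q using Fin.lastCases with
      | last => simp [congrDeriv_canA_apply, hD_last]
      | cast q => simp [congrDeriv_canA_apply]
    · intro i p j q
      induction p using Fin.lastCases <;> induction q using Fin.lastCases <;>
        simp [congrDeriv_canA_apply, hS_hi]
  · refine matrix_ext_of_isSymm (isSymm_congrDeriv (isSymm_canB h rr) _) hT ?_ ?_ ?_
    · intro i p j q
      simp [congrDeriv_canB_apply, hH_succ, hT_lo]
    · intro i p j q
      induction q using Fin.cases with
      | zero => simp [congrDeriv_canB_apply, hD_zero]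
      | succ q =>
        simp only [congrDeriv_canB_apply, canB_hi_succ, canB_lo, single_vecMul, Pi.smul_apply,
          row_apply, submatrix_apply, split_lo, split_hi, fromBlocks_apply₁₁, fromBlocks_apply₂₂,
          of_apply, smul_eq_mul, one_mul]
        linear_combination hD i j p q
    · intro i p j q
      induction p using Fin.cases <;> induction q using Fin.cases <;>
        simp [congrDeriv_canB_apply, hT_hi]

/-- The action of `gl₂` on binary forms of degree `r`: for `p, q ≤ r`, the coefficient of
`x ^ (r - q) * y ^ q` in the image of `x ^ (r - p) * y ^ p` under the derivation with `x ↦ b y` and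
`y ↦ c x + (d - a) y`. Natural number indices avoid casts between blocks. -/
def binaryFormAction (a b c d : ℂ) (r p q : ℕ) : ℂ :=
  if p = q then p * (d - a) else if q = p + 1 then (r - p) * b else if p = q + 1 then p * c else 0

theorem binaryFormAction_last {a b c d : ℂ} {r p : ℕ} (hp : p < r) :
    binaryFormAction a b c d r p r = if p + 1 = r then b else 0 := by
  obtain rfl | hr := eq_or_ne r (p + 1)
  · simp [binaryFormAction]
  · simp only [binaryFormAction, hr, hr.symm, hp.ne, if_false]
    exact if_neg (by omega)

theorem binaryFormAction_succ_zero {a b c d : ℂ} {r p : ℕ} :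
    binaryFormAction a b c d r (p + 1) 0 = if p = 0 then c else 0 := by
  by_cases hp : p = 0 <;> simp [binaryFormAction, hp]

theorem binaryFormAction_succ_succ_sub {a b c d : ℂ} {r p q : ℕ} :
    binaryFormAction a b c d r (p + 1) (q + 1) - binaryFormAction a b c d r p q =
      ((if p = q + 1 then c else 0) + if p = q then d else 0) -
        ((if p = q then a else 0) + if p + 1 = q then b else 0) := by
  obtain rfl | hpq := eq_or_ne p q
  · simp only [binaryFormAction, if_true, left_eq_add, add_eq_left, one_ne_zero, if_false]
    push_cast
    ring
  obtain rfl | hq := eq_or_ne q (p + 1)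
  · have hp : p ≠ p + 1 + 1 := by omega
    simp only [binaryFormAction, hpq, hp, add_left_inj, if_true, if_false]
    push_cast
    ring
  obtain rfl | hp := eq_or_ne p (q + 1)
  · simp only [binaryFormAction, hpq, hq, hq.symm, add_left_inj, if_true, if_false]
    push_cast
    ring
  simp [binaryFormAction, hpq, hq, hq.symm, hp]

theorem smul_canA_add_smul_canB_lo_hi (s t : ℂ) (i j : Fin h) (p : Fin (rr i))
    (q : Fin (rr j + 1)) : (s • canA h rr + t • canB h rr) (lo i p) (hi j q) =
      if i = j then (if (p : ℕ) = q then s else 0) + (if (p : ℕ) + 1 = q then t else 0) else 0 := by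
  by_cases hij : i = j <;> simp [Pi.single_apply, hi_inj, hij, eq_comm]

theorem exists_congrDeriv_canA_canB_eq (rr : Fin h → ℕ) (a b c d : ℂ) :
    ∃ X, congrDeriv (canA h rr) X = a • canA h rr + b • canB h rr ∧
      congrDeriv (canB h rr) X = c • canA h rr + d • canB h rr := by
  have isSymm (s t : ℂ) : (s • canA h rr + t • canB h rr).IsSymm :=
    ((isSymm_canA h rr).smul s).add ((isSymm_canB h rr).smul t)
  have lo_lo (s t : ℂ) (i p j q) :
      (s • canA h rr + t • canB h rr) (lo i p) (lo j q) = 0 := by simp [lo_ne_hi]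
  have hi_hi (s t : ℂ) (i p j q) :
      (s • canA h rr + t • canB h rr) (hi i p) (hi j q) = 0 := by simp
  let D (i j : Fin h) (p : Fin (rr i + 1)) (q : Fin (rr j + 1)) : ℂ :=
    if i = j then binaryFormAction a b c d (rr i) p q else 0
  have hD_last (i j : Fin h) (p : Fin (rr i)) : D i j p.castSucc (Fin.last _) =
      (a • canA h rr + b • canB h rr) (lo i p) (hi j (Fin.last _)) := by
    rw [smul_canA_add_smul_canB_lo_hi]
    obtain rfl | hij := eq_or_ne i j
    · simp [D, binaryFormAction_last, p.2.ne]
    · simp [D, hij]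
  have hD_zero (i j : Fin h) (p : Fin (rr i)) : D i j p.succ 0 =
      (c • canA h rr + d • canB h rr) (lo i p) (hi j 0) := by
    rw [smul_canA_add_smul_canB_lo_hi]
    obtain rfl | hij := eq_or_ne i j
    · by_cases hp : (p : ℕ) = 0 <;> simp [D, binaryFormAction_succ_zero, hp]
    · simp [D, hij]
  have hD (i j : Fin h) (p : Fin (rr i)) (q : Fin (rr j)) :
      D i j p.succ q.succ - D i j p.castSucc q.castSucc =
        (c • canA h rr + d • canB h rr) (lo i p) (hi j q.succ) -
          (a • canA h rr + b • canB h rr) (lo i p) (hi j q.castSucc) := by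
    rw [smul_canA_add_smul_canB_lo_hi, smul_canA_add_smul_canB_lo_hi]
    obtain rfl | hij := eq_or_ne i j
    · simp [D, binaryFormAction_succ_succ_sub]
    · simp [D, hij]
  obtain ⟨X, hA, hB, -⟩ := exists_congrDeriv_eq_of_blocks (isSymm a b) (isSymm c d) (lo_lo a b)
    (lo_lo c d) (hi_hi a b) (hi_hi c d) hD_last hD_zero hD (H := fun _ _ _ _ => 0)
    (by simp) (by simp)
  exact ⟨X, hA, hB⟩

end GL2

section Isotropy

variable {h : ℕ} {rr : Fin h → ℕ}

namespace isotropyAlg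

variable {X : Matrix (PencilIdx h rr) (PencilIdx h rr) ℂ}

section

variable (hA : congrDeriv (canA h rr) X = 0)

include hA

theorem vecMul_canA_eq_neg (u v : PencilIdx h rr) :
    (canA h rr u ᵥ* X) v = -(canA h rr v ᵥ* X) u := by
  rw [eq_neg_iff_add_eq_zero, ← congrDeriv_canA_apply, hA, Matrix.zero_apply]

theorem apply_hi_castSucc_hi_castSucc (i j : Fin h) (p : Fin (rr i)) (q : Fin (rr j)) :
    X (hi i p.castSucc) (hi j q.castSucc) = -X (lo j q) (lo i p) := by
  simpa using vecMul_canA_eq_neg hA (lo i p) (hi j q.castSucc)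

theorem apply_hi_castSucc_hi_last (i j : Fin h) (p : Fin (rr i)) :
    X (hi i p.castSucc) (hi j (Fin.last _)) = 0 := by
  simpa using vecMul_canA_eq_neg hA (lo i p) (hi j (Fin.last _))

theorem apply_lo_hi_castSucc (i j : Fin h) (p : Fin (rr i)) (q : Fin (rr j)) :
    X (lo i p) (hi j q.castSucc) = -X (lo j q) (hi i p.castSucc) := by
  simpa using vecMul_canA_eq_neg hA (hi i p.castSucc) (hi j q.castSucc)

theorem apply_lo_hi_last (i j : Fin h) (p : Fin (rr i)) : X (lo i p) (hi j (Fin.last _)) = 0 := by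
  simpa using vecMul_canA_eq_neg hA (hi i p.castSucc) (hi j (Fin.last _))

theorem apply_hi_castSucc_lo (i j : Fin h) (p : Fin (rr i)) (q : Fin (rr j)) :
    X (hi i p.castSucc) (lo j q) = -X (hi j q.castSucc) (lo i p) := by
  simpa using vecMul_canA_eq_neg hA (lo i p) (lo j q)

end

section

variable (hB : congrDeriv (canB h rr) X = 0)

include hB

theorem vecMul_canB_eq_neg (u v : PencilIdx h rr) :
    (canB h rr u ᵥ* X) v = -(canB h rr v ᵥ* X) u := by
  rw [eq_neg_iff_add_eq_zero, ← congrDeriv_canB_apply, hB, Matrix.zero_apply]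

theorem apply_hi_succ_hi_succ (i j : Fin h) (p : Fin (rr i)) (q : Fin (rr j)) :
    X (hi i p.succ) (hi j q.succ) = -X (lo j q) (lo i p) := by
  simpa using vecMul_canB_eq_neg hB (lo i p) (hi j q.succ)

theorem apply_hi_succ_hi_zero (i j : Fin h) (p : Fin (rr i)) :
    X (hi i p.succ) (hi j 0) = 0 := by
  simpa using vecMul_canB_eq_neg hB (lo i p) (hi j 0)

theorem apply_lo_hi_succ (i j : Fin h) (p : Fin (rr i)) (q : Fin (rr j)) :
    X (lo i p) (hi j q.succ) = -X (lo j q) (hi i p.succ) := by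
  simpa using vecMul_canB_eq_neg hB (hi i p.succ) (hi j q.succ)

theorem apply_lo_hi_zero (i j : Fin h) (p : Fin (rr i)) : X (lo i p) (hi j 0) = 0 := by
  simpa using vecMul_canB_eq_neg hB (hi i p.succ) (hi j 0)

theorem apply_hi_succ_lo (i j : Fin h) (p : Fin (rr i)) (q : Fin (rr j)) :
    X (hi i p.succ) (lo j q) = -X (hi j q.succ) (lo i p) := by
  simpa using vecMul_canB_eq_neg hB (lo i p) (lo j q)

end

variable (hA : congrDeriv (canA h rr) X = 0) (hB : congrDeriv (canB h rr) X = 0)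

include hA hB

theorem apply_lo_hi_eq_zero (i j : Fin h) (p : Fin (rr i)) (q : Fin (rr j + 1)) :
    X (lo i p) (hi j q) = 0 := by
  induction q using Fin.induction generalizing p with
  | zero => exact apply_lo_hi_zero hB i j p
  | succ q ih =>
    rw [apply_lo_hi_succ hB]
    rcases Fin.eq_castSucc_or_eq_last p.succ with ⟨p', hp⟩ | hp
    · rw [hp, ← apply_lo_hi_castSucc hA, ih]
    · rw [hp, apply_lo_hi_last hA, neg_zero]

theorem apply_hi_hi_eq_zero {i j : Fin h}
    (hrow : ∀ k : Fin (rr j + 1), (k : ℕ) + rr i ≤ rr j → X (hi i 0) (hi j k) = 0)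
    (p : Fin (rr i + 1)) (q : Fin (rr j + 1)) : X (hi i p) (hi j q) = 0 :=
  eq_zero_of_toeplitz_s13 (D := fun p q => X (hi i p) (hi j q))
    (fun p q => by
      rw [apply_hi_castSucc_hi_castSucc hA, apply_hi_succ_hi_succ hB])
    (apply_hi_succ_hi_zero hB i j) (apply_hi_castSucc_hi_last hA i j) hrow p q

theorem apply_hi_lo_eq_of_add_eq {i j : Fin h} {p p' : Fin (rr i + 1)} {q q' : Fin (rr j)}
    (hpq : (p : ℕ) + q = p' + q') : X (hi i p) (lo j q) = X (hi i p') (lo j q') := by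
  refine eq_of_hankel (H := fun p q => X (hi i p) (lo j q)) (fun p q q' hq => ?_) hpq
  have hq' : q'.castSucc = q.succ := Fin.ext hq
  rw [apply_hi_castSucc_lo hA, apply_hi_succ_lo hB, hq']

theorem apply_hi_lo_eq_neg {i j : Fin h} {p : Fin (rr i + 1)} {p' : Fin (rr i)}
    {q : Fin (rr j)} {q' : Fin (rr j + 1)} (hpq : (p : ℕ) + q = q' + p') :
    X (hi i p) (lo j q) = -X (hi j q') (lo i p') := by
  rcases Fin.eq_zero_or_eq_succ p with rfl | ⟨p, rfl⟩
  · have hzero : (0 : Fin (rr i + 1)) = Fin.castSucc ⟨0, p'.pos⟩ := rfl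
    rw [hzero, apply_hi_castSucc_lo hA]
    exact congrArg _ (apply_hi_lo_eq_of_add_eq hA hB (by simpa using hpq))
  · rw [apply_hi_succ_lo hB]
    refine congrArg _ (apply_hi_lo_eq_of_add_eq hA hB ?_)
    rw [← hpq, Fin.val_succ, Fin.val_succ]
    omega

end isotropyAlg

/-- Coordinates on the isotropy algebra: `Sum.inl ⟨i, j, k⟩` stands for the `k`-th diagonal of the
Toeplitz block `(i, j)`, where the truncated subtraction counts the diagonals that are free, and
`Sum.inr ⟨i, j, k⟩` for the `k`-th antidiagonal of the Hankel block `(i, j)`. -/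
abbrev IsotropyIdx (rr : Fin h → ℕ) : Type :=
  (Σ i, Σ j, Fin (rr j + 1 - rr i)) ⊕ (Σ i, Σ j : Finset.Iio i, Fin (rr i + rr j))

namespace IsotropyIdx

/-- The row of a matrix entry on the diagonal or antidiagonal that the coordinate stands for. -/
def row : IsotropyIdx rr → PencilIdx h rr
  | .inl ⟨i, _, _⟩ => hi i 0
  | .inr ⟨i, _, k⟩ => hi i ⟨min k (rr i), by omega⟩

/-- The column of a matrix entry on the diagonal or antidiagonal that the coordinate stands for. -/
def col (hrr : ∀ i, 0 < rr i) : IsotropyIdx rr → PencilIdx h rr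
  | .inl ⟨_, j, k⟩ => hi j ⟨k, by omega⟩
  | .inr ⟨i, j, k⟩ => lo (j : Fin h) ⟨k - rr i, by have := hrr j; omega⟩

end IsotropyIdx

namespace isotropyAlg

section

variable (hrr : ∀ i, 0 < rr i) {X : Matrix (PencilIdx h rr) (PencilIdx h rr) ℂ}
  (hA : congrDeriv (canA h rr) X = 0) (hB : congrDeriv (canB h rr) X = 0)
  (hX : ∀ k : IsotropyIdx rr, X k.row (k.col hrr) = 0)

include hA hB hX

theorem apply_hi_lo_eq_zero (i j : Fin h) (p : Fin (rr i + 1)) (q : Fin (rr j)) :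
    X (hi i p) (lo j q) = 0 := by
  have hcoord {i j : Fin h} (hji : j < i) {k : ℕ} (hk : k < rr i + rr j) :
      ∃ (p : Fin (rr i + 1)) (q : Fin (rr j)), k = p + q ∧ X (hi i p) (lo j q) = 0 :=
    ⟨⟨min k (rr i), by omega⟩, ⟨k - rr i, by have := hrr j; omega⟩, by dsimp only; omega,
      hX (.inr ⟨i, ⟨j, Finset.mem_Iio.2 hji⟩, ⟨k, hk⟩⟩)⟩
  rcases lt_trichotomy i j with hij | rfl | hji
  · obtain ⟨q', p', hpq, h0⟩ := hcoord hij (k := p + q) (by omega)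
    rw [apply_hi_lo_eq_neg hA hB hpq, h0, neg_zero]
  · exact self_eq_neg.1 (apply_hi_lo_eq_neg hA hB rfl)
  · obtain ⟨p', q', hpq, h0⟩ := hcoord hji (k := p + q) (by omega)
    rw [apply_hi_lo_eq_of_add_eq hA hB hpq, h0]

theorem eq_zero_of_coords : X = 0 := by
  have hi_hi (i j : Fin h) (p q) : X (hi i p) (hi j q) = 0 :=
    apply_hi_hi_eq_zero hA hB (fun k hk => hX (.inl ⟨i, j, ⟨k, by omega⟩⟩)) p q
  ext u v
  induction u using lo_hi_cases with
  | lo i p =>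
    induction v using lo_hi_cases with
    | lo j q =>
      exact neg_eq_zero.1 <| (apply_hi_castSucc_hi_castSucc hA j i q p).symm.trans (hi_hi ..)
    | hi j q => exact apply_lo_hi_eq_zero hA hB i j p q
  | hi i p =>
    induction v using lo_hi_cases with
    | lo j q => exact apply_hi_lo_eq_zero hrr hA hB hX i j p q
    | hi j q => exact hi_hi i j p q

end

theorem exists_coords_eq (hrr : ∀ i, 0 < rr i) (y : IsotropyIdx rr → ℂ) :
    ∃ X ∈ isotropyAlg (canA h rr) (canB h rr), ∀ k : IsotropyIdx rr, X k.row (k.col hrr) = y k := by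
  let diag (i j : Fin h) (k : ℕ) : ℂ :=
    if hk : k < rr j + 1 - rr i then y (.inl ⟨i, j, ⟨k, hk⟩⟩) else 0
  let antidiag (i j : Fin h) (k : ℕ) : ℂ :=
    if hk : j < i ∧ k < rr i + rr j then
      y (.inr ⟨i, ⟨j, Finset.mem_Iio.2 hk.1⟩, ⟨k, hk.2⟩⟩) else 0
  obtain ⟨X, hA, hB, hD, hH⟩ := exists_congrDeriv_eq_of_blocks (rr := rr) (S := 0) (T := 0)
    (D := fun i j p q => if (p : ℕ) ≤ q then diag i j (q - p) else 0)
    (H := fun i j p q => antidiag i j (p + q) - antidiag j i (q + p))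
    Matrix.isSymm_zero Matrix.isSymm_zero (by simp) (by simp) (by simp) (by simp)
    (fun i j p => by
      have hk : ¬rr j - p < rr j + 1 - rr i := by omega
      simp [diag, hk])
    (by simp) (by simp) (by simp) (by simp [add_right_comm _ 1, ← add_assoc])
  refine ⟨X, ⟨hA, hB⟩, ?_⟩
  rintro (⟨i, j, k⟩ | ⟨i, ⟨j, hj⟩, k⟩)
  · simp [IsotropyIdx.row, IsotropyIdx.col, hD, diag]
  · have hji : j < i := Finset.mem_Iio.1 hj
    have hk : min (k : ℕ) (rr i) + (k - rr i) = k := by omega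
    simp [IsotropyIdx.row, IsotropyIdx.col, hH, antidiag, hji, hji.not_gt, hk]

end isotropyAlg

theorem finrank_isotropyAlg_canA_canB (hrr : ∀ i, 0 < rr i) :
    finrank ℂ (isotropyAlg (canA h rr) (canB h rr)) =
      ∑ i, ∑ j, (rr j + 1 - rr i) + ∑ i, ∑ j ∈ Finset.Iio i, (rr i + rr j) := by
  rw [finrank_eq_card_of_entries (W := isotropyAlg _ _) IsotropyIdx.row (IsotropyIdx.col hrr)
    (fun X ⟨hA, hB⟩ => isotropyAlg.eq_zero_of_coords hrr hA hB)
    (isotropyAlg.exists_coords_eq hrr)]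
  have hsum (i : Fin h) := Finset.sum_coe_sort (Finset.Iio i) fun j => rr i + rr j
  simp only [Fintype.card_sum, Fintype.card_sigma, Fintype.card_fin, hsum]

end Isotropy

theorem two_parts_unbalanced_stabilizer_dim_general {h : ℕ} (hh : 0 < h) (rr : Fin h → ℕ)
    (hrr : ∀ i, 0 < rr i) :
    finrank ℂ (stabAlg (canA h rr) (canB h rr)) =
      4 + (∑ i, ∑ j, (rr j + 1 - rr i) + ∑ i, ∑ j ∈ Finset.Iio i, (rr i + rr j)) := by
  rw [finrank_stabAlg_eq_four_add (linearIndependent_canA_canB (hrr ⟨0, hh⟩))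
    (exists_congrDeriv_canA_canB_eq rr), finrank_isotropyAlg_canA_canB hrr]

/-- For an unbalanced partition `(r₁, r₂)` with `r₁ < r₂`, the Lie
algebra of the stabilizer of the canonical pencil of size `2r + 2`, `r = r₁ + r₂`,
has dimension `2r₂ + 7` over ℂ. -/
theorem two_parts_unbalanced_stabilizer_dim
    (r₁ r₂ : ℕ) (h₁ : 1 ≤ r₁) (h₁₂ : r₁ < r₂) :
    Module.finrank ℂ (stabAlg (canA 2 ![r₁, r₂]) (canB 2 ![r₁, r₂])) = 2 * r₂ + 7 := by
  have hrr : ∀ i, 0 < ![r₁, r₂] i := Fin.forall_fin_two.2 ⟨h₁, h₁.trans h₁₂.le⟩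
  have hIio : Finset.Iio (0 : Fin 2) = ∅ ∧ Finset.Iio (1 : Fin 2) = {0} := ⟨rfl, rfl⟩
  rw [two_parts_unbalanced_stabilizer_dim_general two_pos _ hrr]
  simp only [Fin.sum_univ_two, hIio, Matrix.cons_val_zero, Matrix.cons_val_one,
    add_tsub_cancel_left, Finset.sum_empty, Finset.sum_singleton]
  omega
end
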